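/- arXiv:1408.5659 — 2 statements merged into one kernel-verified Lean document; each statement's English description precedes it below -/
import Mathlib

section
/- Let 1 ≤ q ≤ ∞, k ∈ ℕ, α, β ≥ 0, n ≥ 2k, 0 ≤ ξ ≤ 1 − 2k²n^{−2}, and let f(x) := (x − ξ)_+^{k−1} (with the convention that for k = 1, f is the indicator function of [ξ, 1] scaled as (x−ξ)_+^0). Then there is a constant c > 0, independent of n and ξ (depending only on k, q, α, β), such that E_n(f)_{w_{α,β}, q} ≥ c·n^{−k+1−1/q}·(1−ξ)^{β + (k−1)/2 + 1/(2q)}. -/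
open MeasureTheory Set Filter
open scoped ENNReal

noncomputable section

/-- The Jacobi weight `w_{α,β}(x) = (1+x)^α (1-x)^β`. -/
def jacobi (α β : ℝ) (x : ℝ) : ℝ := (1 + x) ^ α * (1 - x) ^ β

/-- `φ(x) = √(1-x²)`. -/
def phiW (x : ℝ) : ℝ := Real.sqrt (1 - x ^ 2)

/-- The `L^p` norm of `g` on the interval `[a,b]` (essential sup when `p = ∞`). -/
def LpOn (g : ℝ → ℝ) (p : ℝ≥0∞) (a b : ℝ) : ℝ≥0∞ :=
  eLpNorm g p (volume.restrict (Icc a b))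

/-- The `k`-th symmetric difference `Δ_h^k(f,x)` relative to `[-1,1]`. -/
def symmDelta (k : ℕ) (h : ℝ) (f : ℝ → ℝ) (x : ℝ) : ℝ :=
  if (x - k * h / 2 ∈ Icc (-1 : ℝ) 1 ∧ x + k * h / 2 ∈ Icc (-1 : ℝ) 1) then
    ∑ i ∈ Finset.range (k + 1), ((k.choose i : ℝ) * (-1 : ℝ) ^ (k - i) * f (x - k * h / 2 + i * h))
  else 0

/-- Main-part weighted modulus `Ω_φ^k(f,δ)_{w,p}`. -/
def OmegaMain (k : ℕ) (f : ℝ → ℝ) (δ : ℝ) (wt : ℝ → ℝ) (p : ℝ≥0∞) : ℝ≥0∞ :=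
  ⨆ h ∈ Ioc (0 : ℝ) δ,
    LpOn (fun x => wt x * symmDelta k (h * phiW x) f x) p
      (-1 + 2 * (k : ℝ) ^ 2 * h ^ 2) (1 - 2 * (k : ℝ) ^ 2 * h ^ 2)

/-- Forward part `Ω→_φ^k(f,δ)_{w,p}`. -/
def OmegaFwd (k : ℕ) (f : ℝ → ℝ) (δ : ℝ) (wt : ℝ → ℝ) (p : ℝ≥0∞) : ℝ≥0∞ :=
  ⨆ h ∈ Ioc (0 : ℝ) (2 * (k : ℝ) ^ 2 * δ ^ 2),
    LpOn (fun x => wt x * symmDelta k h f (x + k * h / 2)) p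
      (-1) (-1 + 2 * (k : ℝ) ^ 2 * δ ^ 2)

/-- Backward part `Ω←_φ^k(f,δ)_{w,p}`. -/
def OmegaBwd (k : ℕ) (f : ℝ → ℝ) (δ : ℝ) (wt : ℝ → ℝ) (p : ℝ≥0∞) : ℝ≥0∞ :=
  ⨆ h ∈ Ioc (0 : ℝ) (2 * (k : ℝ) ^ 2 * δ ^ 2),
    LpOn (fun x => wt x * symmDelta k h f (x - k * h / 2)) p
      (1 - 2 * (k : ℝ) ^ 2 * δ ^ 2) 1

/-- Weighted Ditzian–Totik modulus `ω_φ^k(f,δ)_{w,p}`. -/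
def omegaDT (k : ℕ) (f : ℝ → ℝ) (δ : ℝ) (wt : ℝ → ℝ) (p : ℝ≥0∞) : ℝ≥0∞ :=
  OmegaMain k f δ wt p + OmegaFwd k f δ wt p + OmegaBwd k f δ wt p

/-- `f` is `k`-monotone on `(-1,1)`: all `k`-th divided differences over `k+1` distinct
points of `(-1,1)` are nonnegative. -/
def kMonotoneOn (k : ℕ) (f : ℝ → ℝ) : Prop :=
  ∀ x : Fin (k + 1) → ℝ, Function.Injective x → (∀ i, x i ∈ Ioo (-1 : ℝ) 1) →
    0 ≤ ∑ i, f (x i) / ∏ j ∈ Finset.univ.erase i, (x i - x j)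

/-- `M^k`, the class of `k`-monotone functions on `(-1,1)`. -/
def MSet (k : ℕ) : Set (ℝ → ℝ) := {f | kMonotoneOn k f}

/-- `M_+^k`, the `k`-monotone functions on `(-1,1)` vanishing on `(-1,0]`. -/
def MPlus (k : ℕ) : Set (ℝ → ℝ) :=
  {f | kMonotoneOn k f ∧ ∀ x : ℝ, -1 < x → x ≤ 0 → f x = 0}

/-- `J_p = (-1/p, ∞)` for finite `p`, `[0,∞)` for `p = ∞`. -/
def Jset (p : ℝ≥0∞) : Set ℝ := if p = ∞ then Ici 0 else Ioi (-1 / p.toReal)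

/-- `W_p^{α,β}`. -/
def WSet (p : ℝ≥0∞) (α β : ℝ) : Set (ℝ → ℝ) :=
  {f | Measurable f ∧ LpOn (fun x => jacobi α β x * f x) p (-1) 1 ≠ ⊤}

/-- `B_p^{α,β}`, the unit sphere of `W_p^{α,β}`. -/
def BSet (p : ℝ≥0∞) (α β : ℝ) : Set (ℝ → ℝ) :=
  {f | Measurable f ∧ LpOn (fun x => jacobi α β x * f x) p (-1) 1 = 1}

/-- Best weighted approximation `E_n(f)_{w,q}` by polynomials of degree at most `n`. -/
def En (n : ℕ) (f : ℝ → ℝ) (wt : ℝ → ℝ) (q : ℝ≥0∞) : ℝ≥0∞ :=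
  ⨅ P ∈ {P : Polynomial ℝ | P.natDegree ≤ n},
    LpOn (fun x => wt x * (f x - P.eval x)) q (-1) 1

/-- `E(X, P_n)_{w,q}`. -/
def EClass (X : Set (ℝ → ℝ)) (n : ℕ) (wt : ℝ → ℝ) (q : ℝ≥0∞) : ℝ≥0∞ :=
  ⨆ f ∈ X, En n f wt q

/-!
By duality, `∫ f g` bounds `E_n(f)_{w,q}` from below whenever `g` annihilates the polynomials of
degree at most `n` and `g / w` has controlled `L^{q'}` norm. Such a `g` lives at scale
`δ = √(1 - ξ) / n` around `ξ`. Start from a bump `u ≥ c` near `ξ`: the product of a power of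
`√(1 - x²)`, which absorbs the weight, of a power of a Fejér kernel centred at `arccos ξ`, and of a
Chebyshev polynomial `T_M` with `M` of order `n`, chosen nonzero at `ξ`; the factor `T_M` makes `u`
orthogonal to polynomials. Then let `g` be the `k`-th difference of `u` with step `-h`,
`h` proportional to `δ`: the pairing of `g` with `(x - ξ)_+^{k-1}` is `(k-1)!` times the `k`-th
difference of the `k`-fold antiderivative of `u`, hence at least `(k-1)! c h^k`.
-/

section Chebyshev

open Polynomial Polynomial.Chebyshev

lemma integral_eval_mul_T_mul_inv_sqrt_eq_zero {S : ℝ[X]} {N : ℕ} (hS : S.natDegree < N) :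
    ∫ x in (-1 : ℝ)..1, S.eval x * (T ℝ N).eval x * √(1 - x ^ 2)⁻¹ = 0 := by
  have hN : N ≠ 0 := Nat.ne_zero_of_lt hS
  have hdeg : (S * T ℝ N).degree < 2 * N := by
    have hnat : (S * T ℝ N).natDegree < 2 * N := by
      have := natDegree_mul_le (p := S) (q := T ℝ N)
      rw [natDegree_T, Int.natAbs_natCast] at this
      omega
    exact degree_le_natDegree.trans_lt (mod_cast hnat)
  have gauss := integral_eq_sumZeroes hN hdeg
  simp only [integral_measureT, eval_mul] at gauss
  rw [gauss, sumZeroes, Finset.sum_eq_zero, mul_zero]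
  intro i _
  have hzero : Real.cos (((N : ℤ) : ℝ) * ((2 * i + 1) / (2 * N) * Real.pi)) = 0 := by
    refine Real.cos_eq_zero_iff.2 ⟨i, ?_⟩
    push_cast
    field_simp
  rw [eval_mul, T_real_cos, hzero, mul_zero]

lemma sqrt_one_sub_sq_eq_zero {x : ℝ} (hx : x ∉ Ioo (-1 : ℝ) 1) : √(1 - x ^ 2) = 0 := by
  refine Real.sqrt_eq_zero_of_nonpos ?_
  by_contra! h
  exact hx (abs_lt.1 ((sq_lt_one_iff_abs_lt_one x).1 (by linarith)))

lemma integral_eval_mul_sqrt_pow_mul_T_eq_zero {Q : ℝ[X]} {p N : ℕ}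
    (hQ : Q.natDegree + 2 * (p + 1) < N) :
    ∫ x, Q.eval x * (√(1 - x ^ 2) ^ (2 * p + 1) * (T ℝ N).eval x) = 0 := by
  have hdeg : (Q * (1 - X ^ 2) ^ (p + 1)).natDegree < N := by
    have hsub : (1 - X ^ 2 : ℝ[X]).natDegree ≤ 2 := by compute_degree
    have := natDegree_mul_le (p := Q) (q := (1 - X ^ 2) ^ (p + 1))
    have := natDegree_pow_le_of_le (p + 1) hsub
    omega
  have hsupp : Function.support (fun x : ℝ =>
      Q.eval x * (√(1 - x ^ 2) ^ (2 * p + 1) * (T ℝ N).eval x)) ⊆ Ioc (-1) 1 := by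
    refine fun x hx => Ioo_subset_Ioc_self (not_not.1 fun hx' => hx ?_)
    simp [sqrt_one_sub_sq_eq_zero hx']
  rw [← intervalIntegral.integral_eq_integral_of_support_subset hsupp,
    ← integral_eval_mul_T_mul_inv_sqrt_eq_zero hdeg]
  refine intervalIntegral.integral_congr fun x _ => ?_
  have hweight : (1 - x ^ 2) ^ (p + 1) * (√(1 - x ^ 2))⁻¹ = √(1 - x ^ 2) ^ (2 * p + 1) := by
    rcases le_or_gt (1 - x ^ 2) 0 with h | h
    · simp [Real.sqrt_eq_zero_of_nonpos h]
    · nth_rewrite 1 [← Real.sq_sqrt h.le]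
      field_simp
      ring
  simp only [eval_mul, eval_pow, eval_sub, eval_one, eval_X, Real.sqrt_inv, ← hweight]
  ring

end Chebyshev

section Fejer

open Polynomial Polynomial.Chebyshev

/-- The Fejér kernel `|∑_{j < n} e^{ijt}|² / n²`, normalized to take the value `1` at `t = 0`. -/
def fejerKernel (n : ℕ) (t : ℝ) : ℝ :=
  (‖∑ j ∈ Finset.range n, Complex.exp (t * Complex.I) ^ j‖ / n) ^ 2

lemma fejerKernel_nonneg (n : ℕ) (t : ℝ) : 0 ≤ fejerKernel n t := sq_nonneg _

lemma fejerKernel_le_one (n : ℕ) (t : ℝ) : fejerKernel n t ≤ 1 := by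
  have hsum : ‖∑ j ∈ Finset.range n, Complex.exp (t * Complex.I) ^ j‖ ≤ n :=
    (norm_sum_le _ _).trans (by simp [Complex.norm_exp_ofReal_mul_I])
  exact pow_le_one₀ (by positivity) (div_le_one_of_le₀ hsum n.cast_nonneg)

lemma fejerKernel_mul_sq_le_one (n : ℕ) (t : ℝ) :
    fejerKernel n t * (n * Real.sin (t / 2)) ^ 2 ≤ 1 := by
  have hgeom :
      ‖∑ j ∈ Finset.range n, Complex.exp (t * Complex.I) ^ j‖ * |Real.sin (t / 2)| ≤ 1 := by
    have hfactor : ‖Complex.exp (t * Complex.I) - 1‖ = 2 * |Real.sin (t / 2)| := by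
      rw [mul_comm (t : ℂ), Complex.norm_exp_I_mul_ofReal_sub_one, norm_mul, Real.norm_two,
        Real.norm_eq_abs]
    have hbound : ‖Complex.exp (t * Complex.I) ^ n - 1‖ ≤ 2 := by
      refine (norm_sub_le _ _).trans ?_
      rw [norm_pow, Complex.norm_exp_ofReal_mul_I]
      norm_num
    rw [← geom_sum_mul, norm_mul, hfactor] at hbound
    linarith
  rcases n.eq_zero_or_pos with rfl | hn
  · simp
  calc fejerKernel n t * (n * Real.sin (t / 2)) ^ 2
      = (‖∑ j ∈ Finset.range n, Complex.exp (t * Complex.I) ^ j‖ * |Real.sin (t / 2)|) ^ 2 := by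
        rw [fejerKernel, mul_pow _ |_|, sq_abs]
        field_simp
    _ ≤ 1 := pow_le_one₀ (by positivity) hgeom

lemma fejerKernel_mul_one_add_sq_le_two (n : ℕ) (t : ℝ) :
    fejerKernel n t * (1 + (n * Real.sin (t / 2)) ^ 2) ≤ 2 := by
  linarith [fejerKernel_le_one n t, fejerKernel_mul_sq_le_one n t]

lemma one_quarter_le_fejerKernel {n : ℕ} (hn : 1 ≤ n) {t : ℝ} (ht : n * |t| ≤ 1) :
    1 / 4 ≤ fejerKernel n t := by
  have hterm : ∀ j ∈ Finset.range n, 1 / 2 ≤ (Complex.exp (t * Complex.I) ^ j).re := by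
    intro j hj
    have hjt : (j * t) ^ 2 ≤ 1 := by
      rw [sq_le_one_iff_abs_le_one, abs_mul, Nat.abs_cast]
      have : (j : ℝ) ≤ n := mod_cast (Finset.mem_range.1 hj).le
      exact le_trans (by gcongr) ht
    rw [← Complex.exp_nat_mul, ← mul_assoc, ← Complex.ofReal_natCast, ← Complex.ofReal_mul,
      Complex.exp_ofReal_mul_I_re]
    linarith [Real.one_sub_sq_div_two_le_cos (x := j * t)]
  have hsum : n * (1 / 2) ≤ ‖∑ j ∈ Finset.range n, Complex.exp (t * Complex.I) ^ j‖ := by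
    refine le_trans ?_ (Complex.re_le_norm _)
    rw [Complex.re_sum]
    simpa using Finset.card_nsmul_le_sum _ _ _ hterm
  have hn0 : (0 : ℝ) < n := mod_cast hn
  have hquot : 1 / 2 ≤ ‖∑ j ∈ Finset.range n, Complex.exp (t * Complex.I) ^ j‖ / n :=
    (le_div_iff₀ hn0).2 (by linarith)
  calc (1 : ℝ) / 4 = (1 / 2) ^ 2 := by norm_num
    _ ≤ fejerKernel n t := by unfold fejerKernel; gcongr

lemma fejerKernel_eq_sum_cos (n : ℕ) (t : ℝ) : fejerKernel n t =
    (∑ j ∈ Finset.range n, ∑ l ∈ Finset.range n, Real.cos ((j - l : ℝ) * t)) / n ^ 2 := by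
  have hpow (j : ℕ) : Complex.exp (t * Complex.I) ^ j = Complex.exp ((j * t : ℝ) * Complex.I) := by
    rw [← Complex.exp_nat_mul]
    push_cast
    ring_nf
  rw [fejerKernel, div_pow, Complex.sq_norm, Complex.normSq_apply, Complex.re_sum, Complex.im_sum,
    Finset.sum_mul_sum, Finset.sum_mul_sum]
  simp only [hpow, Complex.exp_ofReal_mul_I_re, Complex.exp_ofReal_mul_I_im,
    ← Finset.sum_add_distrib, ← Real.cos_sub, sub_mul]

/-- The algebraic form of a pair of Fejér kernels: under `x = cos θ` it becomes the even function
`F(θ - θ₀) + F(θ + θ₀)`, where `F` is the Fejér kernel. -/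
def fejerPolynomial (n : ℕ) (θ₀ : ℝ) : ℝ[X] :=
  C (1 / (n : ℝ) ^ 2) * ∑ j ∈ Finset.range n, ∑ l ∈ Finset.range n,
    C (2 * Real.cos ((j - l : ℝ) * θ₀)) * T ℝ ((j : ℤ) - (l : ℤ))

lemma natDegree_fejerPolynomial_le (n : ℕ) (θ₀ : ℝ) : (fejerPolynomial n θ₀).natDegree ≤ n := by
  refine (natDegree_C_mul_le _ _).trans ?_
  refine natDegree_sum_le_of_forall_le _ _ fun j hj =>
    natDegree_sum_le_of_forall_le _ _ fun l hl => (natDegree_C_mul_le _ _).trans ?_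
  rw [natDegree_T]
  have := Finset.mem_range.1 hj
  have := Finset.mem_range.1 hl
  omega

lemma eval_cos_fejerPolynomial (n : ℕ) (θ₀ θ : ℝ) : (fejerPolynomial n θ₀).eval (Real.cos θ) =
    fejerKernel n (θ - θ₀) + fejerKernel n (θ + θ₀) := by
  have hcos (a : ℝ) : 2 * Real.cos (a * θ₀) * Real.cos (a * θ) =
      Real.cos (a * (θ - θ₀)) + Real.cos (a * (θ + θ₀)) := by
    rw [mul_sub, mul_add, Real.cos_sub, Real.cos_add]
    ring
  simp only [fejerPolynomial, eval_mul, eval_C, eval_finsetSum, T_real_cos, Int.cast_sub,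
    Int.cast_natCast, hcos, Finset.sum_add_distrib, fejerKernel_eq_sum_cos]
  ring

end Fejer

section HalfAngle

open Real

lemma two_mul_sin_half_sq (θ : ℝ) : 2 * sin (θ / 2) ^ 2 = 1 - cos θ := by
  rw [sin_sq_eq_half_sub, mul_div_cancel₀ θ two_ne_zero]
  ring

lemma sin_add_sq_le (a b : ℝ) : sin (a + b) ^ 2 ≤ 2 * sin a ^ 2 + 2 * sin b ^ 2 := by
  have ha := mul_le_of_le_one_right (sq_nonneg (sin a)) (cos_sq_le_one b)
  have hb := mul_le_of_le_one_right (sq_nonneg (sin b)) (cos_sq_le_one a)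
  rw [sin_add]
  linarith [sq_nonneg (sin a * cos b - cos a * sin b)]

lemma sin_half_sub_sq_le_sin_half_add_sq {θ θ₀ : ℝ} (hθ : θ ∈ Icc 0 π) (hθ₀ : θ₀ ∈ Icc 0 π) :
    sin ((θ - θ₀) / 2) ^ 2 ≤ sin ((θ + θ₀) / 2) ^ 2 := by
  have hprod := mul_nonneg (sin_nonneg_of_mem_Icc hθ) (sin_nonneg_of_mem_Icc hθ₀)
  have hsub := two_mul_sin_half_sq (θ - θ₀)
  have hadd := two_mul_sin_half_sq (θ + θ₀)
  rw [cos_sub] at hsub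
  rw [cos_add] at hadd
  linarith

lemma eval_cos_fejerPolynomial_le (n : ℕ) {θ θ₀ : ℝ} (hθ : θ ∈ Icc 0 π) (hθ₀ : θ₀ ∈ Icc 0 π) :
    (fejerPolynomial n θ₀).eval (cos θ) ≤ 4 / (1 + (n * sin ((θ - θ₀) / 2)) ^ 2) := by
  have hmono : (n * sin ((θ - θ₀) / 2)) ^ 2 ≤ (n * sin ((θ + θ₀) / 2)) ^ 2 := by
    rw [mul_pow, mul_pow]
    gcongr ?_ * ?_
    exact sin_half_sub_sq_le_sin_half_add_sq hθ hθ₀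
  have hsub := fejerKernel_mul_one_add_sq_le_two n (θ - θ₀)
  have hadd := fejerKernel_mul_one_add_sq_le_two n (θ + θ₀)
  have := mul_le_mul_of_nonneg_left hmono (fejerKernel_nonneg n (θ + θ₀))
  rw [eval_cos_fejerPolynomial, le_div_iff₀ (by positivity)]
  linarith

variable {n : ℕ} {θ θ₀ : ℝ}

lemma sin_sq_le_of_one_div_sq_le (hn : 1 ≤ n) (hθ₀ : 1 / (n : ℝ) ^ 2 ≤ 1 - cos θ₀) (t : ℝ) :
    sin t ^ 2 ≤ (n * sin t) ^ 2 * (1 - cos θ₀) := by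
  have hn0 : (0 : ℝ) < n := mod_cast hn
  rw [div_le_iff₀ (by positivity)] at hθ₀
  linarith [mul_le_mul_of_nonneg_left hθ₀ (sq_nonneg (sin t))]

lemma one_sub_cos_le (hn : 1 ≤ n) (hθ₀ : 1 / (n : ℝ) ^ 2 ≤ 1 - cos θ₀) (θ : ℝ) :
    1 - cos θ ≤ 4 * (1 + (n * sin ((θ - θ₀) / 2)) ^ 2) * (1 - cos θ₀) := by
  have hsplit := sin_add_sq_le ((θ - θ₀) / 2) (θ₀ / 2)
  rw [← add_div, sub_add_cancel] at hsplit
  linarith [two_mul_sin_half_sq θ, two_mul_sin_half_sq θ₀,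
    sin_sq_le_of_one_div_sq_le hn hθ₀ ((θ - θ₀) / 2), cos_le_one θ₀]

lemma one_add_cos_sub_cos_div_sq_le (hn : 1 ≤ n) (hθ₀ : 1 / (n : ℝ) ^ 2 ≤ 1 - cos θ₀) (θ : ℝ) :
    1 + ((cos θ - cos θ₀) / (√(1 - cos θ₀) / n)) ^ 2 ≤
      8 * (1 + (n * sin ((θ - θ₀) / 2)) ^ 2) ^ 2 := by
  have hX : 0 < 1 - cos θ₀ := lt_of_lt_of_le (by positivity) hθ₀
  set X := 1 - cos θ₀
  set a := n * sin ((θ - θ₀) / 2) with ha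
  have hsin : sin ((θ + θ₀) / 2) ^ 2 ≤ (2 * a ^ 2 + 4) * X := by
    have hdouble : sin θ₀ ^ 2 ≤ 2 * X := by
      rw [sin_sq]
      linarith [sq_nonneg (1 - cos θ₀)]
    have hsplit := sin_add_sq_le ((θ - θ₀) / 2) θ₀
    rw [show (θ - θ₀) / 2 + θ₀ = (θ + θ₀) / 2 by ring] at hsplit
    linarith [sin_sq_le_of_one_div_sq_le hn hθ₀ ((θ - θ₀) / 2)]
  have hquot : ((cos θ - cos θ₀) / (√X / n)) ^ 2 = 4 * a ^ 2 * sin ((θ + θ₀) / 2) ^ 2 / X := by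
    rw [cos_sub_cos, div_pow, div_pow, sq_sqrt hX.le, ha]
    field_simp
    ring
  calc 1 + ((cos θ - cos θ₀) / (√X / n)) ^ 2
      ≤ 1 + 4 * a ^ 2 * ((2 * a ^ 2 + 4) * X) / X := by rw [hquot]; gcongr
    _ ≤ 8 * (1 + a ^ 2) ^ 2 := by
      field_simp
      linarith

lemma sqrt_one_sub_cos_mul_abs_sub_le (hθ : θ ∈ Icc 0 π) (hθ₀ : θ₀ ∈ Icc 0 (π / 2)) :
    √(1 - cos θ₀) * |θ - θ₀| ≤ 4 * |cos θ - cos θ₀| := by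
  obtain ⟨hθ0, hθπ⟩ := hθ
  obtain ⟨hθ₀0, hθ₀π⟩ := hθ₀
  have hy : 0 ≤ sin (θ₀ / 2) := sin_nonneg_of_nonneg_of_le_pi (by linarith) (by linarith)
  have hmono : sin (θ₀ / 2) ≤ sin ((θ + θ₀) / 2) := by
    have hdiff := sin_sub_sin ((θ + θ₀) / 2) (θ₀ / 2)
    have := mul_nonneg
      (sin_nonneg_of_nonneg_of_le_pi (x := ((θ + θ₀) / 2 - θ₀ / 2) / 2) (by linarith) (by linarith))
      (cos_nonneg_of_neg_pi_div_two_le_of_le (x := ((θ + θ₀) / 2 + θ₀ / 2) / 2)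
        (by linarith) (by linarith))
    linarith
  have hsqrt : √(1 - cos θ₀) ≤ 2 * sin (θ₀ / 2) := by
    refine sqrt_le_iff.2 ⟨by positivity, ?_⟩
    linarith [two_mul_sin_half_sq θ₀, sq_nonneg (sin (θ₀ / 2))]
  have hjordan : |θ - θ₀| ≤ 4 * |sin ((θ - θ₀) / 2)| := by
    have h := mul_abs_le_abs_sin (x := (θ - θ₀) / 2)
      (abs_le.2 ⟨by linarith, by linarith⟩)
    have hπ : 1 / 2 ≤ 2 / π := by
      rw [div_le_div_iff₀ two_pos pi_pos]
      linarith [pi_le_four]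
    rw [abs_div, abs_two] at h
    linarith [mul_le_mul_of_nonneg_right hπ (by positivity : 0 ≤ |θ - θ₀| / 2)]
  calc √(1 - cos θ₀) * |θ - θ₀|
      ≤ (2 * sin ((θ + θ₀) / 2)) * (4 * |sin ((θ - θ₀) / 2)|) :=
        mul_le_mul (by linarith) hjordan (abs_nonneg _) (by linarith)
    _ = 4 * |cos θ - cos θ₀| := by
      rw [cos_sub_cos, abs_mul, abs_mul, abs_of_nonneg (hy.trans hmono)]
      norm_num
      ring

end HalfAngle

section Kernel

open Polynomial Polynomial.Chebyshev

/-- `g` is a continuous function supported in `[-1, 1]` that annihilates the polynomials of degree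
at most `n` and is concentrated around `ξ` at scale `δ`, relative to the weight `w`. Pairing with
such a function bounds the best approximation from below. -/
structure IsTestFunction (n : ℕ) (w : ℝ → ℝ) (ξ δ A : ℝ) (g : ℝ → ℝ) : Prop where
  continuous : Continuous g
  eq_zero : ∀ x ∉ Icc (-1 : ℝ) 1, g x = 0
  integral_eval_mul : ∀ Q : ℝ[X], Q.natDegree ≤ n → ∫ x, Q.eval x * g x = 0
  decay : ∀ x ∈ Icc (-1 : ℝ) 1, |g x| * (1 + ((x - ξ) / δ) ^ 2) ≤ A * w x

/-- An annihilator of low degree polynomials concentrated near `ξ`: the Chebyshev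
polynomial `T_M`, localized by a power of the Fejér kernel centred at `ξ` and multiplied by an odd
power of `√(1 - x²)`. The latter dominates any Jacobi weight once `p` is large, and vanishes off
`[-1, 1]`, where `Real.sqrt` is evaluated at a negative number. -/
def localizedKernel (p n M : ℕ) (ξ x : ℝ) : ℝ :=
  (√(1 - x ^ 2) / √(1 - ξ)) ^ (2 * p + 1) *
    (fejerPolynomial n (Real.arccos ξ)).eval x ^ (p + 3) * (T ℝ M).eval x

variable {n : ℕ} {ξ : ℝ}

lemma continuous_localizedKernel (p n M : ℕ) (ξ : ℝ) : Continuous (localizedKernel p n M ξ) := by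
  unfold localizedKernel
  fun_prop

lemma localizedKernel_eq_zero (p n M : ℕ) (ξ : ℝ) {x : ℝ} (hx : x ∉ Ioo (-1 : ℝ) 1) :
    localizedKernel p n M ξ x = 0 := by
  simp [localizedKernel, sqrt_one_sub_sq_eq_zero hx]

lemma integral_eval_mul_localizedKernel_eq_zero {p n M : ℕ} (ξ : ℝ) {Q : ℝ[X]}
    (hQ : Q.natDegree + n * (p + 3) + 2 * (p + 1) < M) :
    ∫ x, Q.eval x * localizedKernel p n M ξ x = 0 := by
  set R := fejerPolynomial n (Real.arccos ξ) with hR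
  have hdeg : (Q * R ^ (p + 3)).natDegree + 2 * (p + 1) < M := by
    have := natDegree_mul_le (p := Q) (q := R ^ (p + 3))
    have := natDegree_pow_le_of_le (p + 3) (natDegree_fejerPolynomial_le n (Real.arccos ξ))
    rw [← hR] at this
    linarith
  calc ∫ x, Q.eval x * localizedKernel p n M ξ x
      = ∫ x, (√(1 - ξ) ^ (2 * p + 1))⁻¹ * ((Q * R ^ (p + 3)).eval x *
          (√(1 - x ^ 2) ^ (2 * p + 1) * (T ℝ M).eval x)) := by
        congr 1 with x
        rw [localizedKernel, ← hR, div_pow, eval_mul, eval_pow]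
        ring
    _ = 0 := by
      rw [integral_const_mul, integral_eval_mul_sqrt_pow_mul_T_eq_zero hdeg, mul_zero]

lemma jacobi_nonneg (α β : ℝ) {x : ℝ} (hx : x ∈ Icc (-1 : ℝ) 1) : 0 ≤ jacobi α β x :=
  mul_nonneg (Real.rpow_nonneg (by linarith [hx.1]) _) (Real.rpow_nonneg (by linarith [hx.2]) _)

lemma sqrt_pow_le_mul_rpow {r B β : ℝ} {p : ℕ} (hr : 0 ≤ r) (hrB : r ≤ B) (hB : 1 ≤ B)
    (hβ : 0 ≤ β) (hβp : β ≤ p + 1 / 2) : √r ^ (2 * p + 1) ≤ B ^ (p + 1) * r ^ β := by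
  rcases hr.eq_or_lt with rfl | hr
  · simp only [Real.sqrt_zero, ne_eq, Nat.add_eq_zero_iff, one_ne_zero, and_false,
      not_false_eq_true, zero_pow]
    positivity
  calc √r ^ (2 * p + 1) = r ^ (p + 1 / 2 - β) * r ^ β := by
        rw [← Real.rpow_add hr, Real.sqrt_eq_rpow, ← Real.rpow_natCast, ← Real.rpow_mul hr.le]
        congr 1
        push_cast
        ring
    _ ≤ B ^ (p + 1) * r ^ β := by
      gcongr
      calc r ^ (p + 1 / 2 - β) ≤ B ^ (p + 1 / 2 - β) :=
            Real.rpow_le_rpow hr.le hrB (by linarith)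
        _ ≤ B ^ ((p + 1 : ℕ) : ℝ) :=
          Real.rpow_le_rpow_of_exponent_le hB (by push_cast; linarith)
        _ = B ^ (p + 1) := Real.rpow_natCast _ _

lemma sqrt_one_sub_sq_div_pow_le {α β x X τ : ℝ} {p : ℕ} (hα : 0 ≤ α) (hβ : 0 ≤ β)
    (hαp : α ≤ p + 1 / 2) (hβp : β ≤ p + 1 / 2) (hx : x ∈ Icc (-1 : ℝ) 1) (hX : 0 < X)
    (hτ : 1 ≤ 4 * τ) (hxX : 1 - x ≤ 4 * τ * X) :
    (√(1 - x ^ 2) / √X) ^ (2 * p + 1) ≤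
      2 ^ (p + 1) * (4 * τ) ^ (p + 1) * (jacobi α β x / X ^ β) := by
  have hleft : 0 ≤ 1 + x := by linarith [hx.1]
  have hright : 0 ≤ 1 - x := by linarith [hx.2]
  have hsplit : √(1 - x ^ 2) / √X = √(1 + x) * √((1 - x) / X) := by
    rw [← Real.sqrt_div' _ hX.le, ← Real.sqrt_mul hleft]
    ring_nf
  calc (√(1 - x ^ 2) / √X) ^ (2 * p + 1)
      = √(1 + x) ^ (2 * p + 1) * √((1 - x) / X) ^ (2 * p + 1) := by rw [hsplit, mul_pow]
    _ ≤ (2 ^ (p + 1) * (1 + x) ^ α) * ((4 * τ) ^ (p + 1) * ((1 - x) / X) ^ β) := by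
      gcongr
      · exact sqrt_pow_le_mul_rpow hleft (by linarith [hx.2]) one_le_two hα hαp
      · exact sqrt_pow_le_mul_rpow (by positivity) ((div_le_iff₀ hX).2 hxX) hτ hβ hβp
    _ = 2 ^ (p + 1) * (4 * τ) ^ (p + 1) * (jacobi α β x / X ^ β) := by
      rw [Real.div_rpow hright hX.le, jacobi]
      ring

lemma abs_localizedKernel_mul_le {α β x : ℝ} {p : ℕ} (M : ℕ) (hα : 0 ≤ α) (hβ : 0 ≤ β)
    (hαp : α ≤ p + 1 / 2) (hβp : β ≤ p + 1 / 2) (hn : 1 ≤ n) (hξ : ξ ∈ Icc (-1 : ℝ) 1)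
    (hξn : 1 / (n : ℝ) ^ 2 ≤ 1 - ξ) (hx : x ∈ Icc (-1 : ℝ) 1) :
    |localizedKernel p n M ξ x| * (1 + ((x - ξ) / (√(1 - ξ) / n)) ^ 2) ≤
      8 * 2 ^ (p + 1) * 4 ^ (p + 1) * 4 ^ (p + 3) / (1 - ξ) ^ β * jacobi α β x := by
  set θ := Real.arccos x
  set θ₀ := Real.arccos ξ
  have hcos : Real.cos θ = x := Real.cos_arccos hx.1 hx.2
  have hcos₀ : Real.cos θ₀ = ξ := Real.cos_arccos hξ.1 hξ.2
  have hX : 0 < 1 - ξ := lt_of_lt_of_le (by positivity) hξn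
  have hR := eval_cos_fejerPolynomial_le n (θ := θ) (θ₀ := θ₀)
    ⟨Real.arccos_nonneg x, Real.arccos_le_pi x⟩ ⟨Real.arccos_nonneg ξ, Real.arccos_le_pi ξ⟩
  have hR0 : 0 ≤ (fejerPolynomial n θ₀).eval (Real.cos θ) := by
    rw [eval_cos_fejerPolynomial]
    exact add_nonneg (fejerKernel_nonneg _ _) (fejerKernel_nonneg _ _)
  have hdist := one_sub_cos_le hn (θ₀ := θ₀) (by rwa [hcos₀]) θ
  have hdecay := one_add_cos_sub_cos_div_sq_le hn (θ₀ := θ₀) (by rwa [hcos₀]) θ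
  have hT : |(T ℝ M).eval x| ≤ 1 := abs_eval_T_real_le_one M (abs_le.2 hx)
  rw [hcos] at hR hR0
  rw [hcos, hcos₀] at hdist hdecay
  set τ := 1 + (n * Real.sin ((θ - θ₀) / 2)) ^ 2
  have hτ : 1 ≤ τ := le_add_of_nonneg_right (sq_nonneg _)
  have hjacobi := jacobi_nonneg α β hx
  calc |localizedKernel p n M ξ x| * (1 + ((x - ξ) / (√(1 - ξ) / n)) ^ 2)
      = (√(1 - x ^ 2) / √(1 - ξ)) ^ (2 * p + 1) * (fejerPolynomial n θ₀).eval x ^ (p + 3) *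
          |(T ℝ M).eval x| * (1 + ((x - ξ) / (√(1 - ξ) / n)) ^ 2) := by
        rw [localizedKernel, abs_mul, abs_of_nonneg (by positivity)]
    _ ≤ 2 ^ (p + 1) * (4 * τ) ^ (p + 1) * (jacobi α β x / (1 - ξ) ^ β) * (4 / τ) ^ (p + 3) * 1 *
          (8 * τ ^ 2) := by
      gcongr
      exact sqrt_one_sub_sq_div_pow_le hα hβ hαp hβp hx hX (by linarith) hdist
    _ = 8 * 2 ^ (p + 1) * 4 ^ (p + 1) * 4 ^ (p + 3) / (1 - ξ) ^ β * jacobi α β x := by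
      rw [mul_pow, div_pow]
      field_simp
      ring

lemma exists_half_le_abs_cos_mul (N : ℕ) (θ : ℝ) :
    ∃ M : ℕ, N ≤ M ∧ M ≤ 2 * N ∧ 1 / 2 ≤ |Real.cos (M * θ)| := by
  rcases le_or_gt (1 / 2) |Real.cos (N * θ)| with h | h
  · exact ⟨N, le_rfl, by lia, h⟩
  · refine ⟨2 * N, by lia, le_rfl, ?_⟩
    have hsq : Real.cos (N * θ) ^ 2 < (1 / 2) ^ 2 :=
      sq_lt_sq.2 (by rwa [abs_of_pos (one_half_pos (α := ℝ))])
    rw [Nat.cast_mul, Nat.cast_two, mul_assoc, Real.cos_two_mul, le_abs]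
    right
    linarith

lemma one_quarter_le_sign_mul {a b : ℝ} (ha : 1 / 2 ≤ |a|) (hab : |b - a| ≤ 1 / 4) :
    1 / 4 ≤ (SignType.sign a : ℝ) * b := by
  have := abs_le.1 hab
  rcases lt_or_ge a 0 with ha0 | ha0
  · rw [abs_of_neg ha0] at ha
    simp only [sign_neg ha0, SignType.coe_neg, SignType.coe_one]
    linarith
  · rw [abs_of_nonneg ha0] at ha
    simp only [sign_pos (by linarith : 0 < a), SignType.coe_one]
    linarith

lemma sqrt_div_le_self {X : ℝ} (hn : 1 ≤ n) (hX : 1 / (n : ℝ) ^ 2 ≤ X) : √X / n ≤ X := by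
  have hX0 : 0 ≤ X := le_trans (by positivity) hX
  have hinv : 1 / n ≤ √X := Real.le_sqrt_of_sq_le (by rwa [div_pow, one_pow])
  calc √X / n = √X * (1 / n) := by ring
    _ ≤ √X * √X := by gcongr
    _ = X := Real.mul_self_sqrt hX0

lemma half_le_sqrt_one_sub_sq_div {x : ℝ} (hξ0 : 0 ≤ ξ) (hξ1 : ξ < 1)
    (hx : |x - ξ| ≤ (1 - ξ) / 2) : 1 / 2 ≤ √(1 - x ^ 2) / √(1 - ξ) := by
  obtain ⟨hlow, hhigh⟩ := abs_le.1 hx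
  rw [← Real.sqrt_div' _ (by linarith)]
  refine Real.le_sqrt_of_sq_le ((le_div_iff₀ (by linarith)).2 ?_)
  calc (1 / 2 : ℝ) ^ 2 * (1 - ξ) = (1 / 2) * ((1 - ξ) / 2) := by ring
    _ ≤ (1 + x) * (1 - x) := by gcongr <;> linarith
    _ = 1 - x ^ 2 := by ring

lemma natCast_mul_abs_arccos_sub_arccos_le {x ε : ℝ} (hn : 1 ≤ n) (hξ0 : 0 ≤ ξ) (hξ1 : ξ < 1)
    (hx : x ∈ Icc (-1 : ℝ) 1) (hxξ : |x - ξ| ≤ ε * (√(1 - ξ) / n)) :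
    n * |Real.arccos x - Real.arccos ξ| ≤ 4 * ε := by
  have hn0 : (0 : ℝ) < n := mod_cast hn
  have hsqrt : 0 < √(1 - ξ) := Real.sqrt_pos.2 (by linarith)
  have h := sqrt_one_sub_cos_mul_abs_sub_le ⟨Real.arccos_nonneg x, Real.arccos_le_pi x⟩
    ⟨Real.arccos_nonneg ξ, Real.arccos_le_pi_div_two.2 hξ0⟩
  rw [Real.cos_arccos hx.1 hx.2, Real.cos_arccos (by linarith) hξ1.le] at h
  refine le_of_mul_le_mul_left ?_ hsqrt
  calc √(1 - ξ) * (n * |Real.arccos x - Real.arccos ξ|)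
      = n * (√(1 - ξ) * |Real.arccos x - Real.arccos ξ|) := by ring
    _ ≤ n * (4 * (ε * (√(1 - ξ) / n))) := mul_le_mul_of_nonneg_left (by linarith) hn0.le
    _ = √(1 - ξ) * (4 * ε) := by field_simp

lemma abs_eval_T_sub_cos_le (M : ℕ) {x : ℝ} (hx : x ∈ Icc (-1 : ℝ) 1) (θ₀ : ℝ) :
    |(T ℝ M).eval x - Real.cos (M * θ₀)| ≤ M * |Real.arccos x - θ₀| := by
  nth_rewrite 1 [← Real.cos_arccos hx.1 hx.2]
  rw [T_real_cos, Int.cast_natCast, ← Nat.abs_cast M, ← abs_mul, mul_sub, Nat.abs_cast]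
  exact Real.abs_cos_sub_cos_le _ _

lemma one_quarter_le_eval_fejerPolynomial {x θ₀ : ℝ} (hn : 1 ≤ n) (hx : x ∈ Icc (-1 : ℝ) 1)
    (hxθ₀ : n * |Real.arccos x - θ₀| ≤ 1) : 1 / 4 ≤ (fejerPolynomial n θ₀).eval x := by
  rw [← Real.cos_arccos hx.1 hx.2, eval_cos_fejerPolynomial]
  exact le_add_of_le_of_nonneg (one_quarter_le_fejerKernel hn hxθ₀) (fejerKernel_nonneg _ _)

lemma le_sign_mul_localizedKernel {p κ M : ℕ} {x : ℝ} (hn : 1 ≤ n) (hκ : 1 ≤ κ)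
    (hM : M ≤ 2 * (κ * n)) (hξ0 : 0 ≤ ξ) (hξn : 1 / (n : ℝ) ^ 2 ≤ 1 - ξ)
    (hcosM : 1 / 2 ≤ |Real.cos (M * Real.arccos ξ)|)
    (hx : |x - ξ| ≤ 1 / (32 * κ) * (√(1 - ξ) / n)) :
    (1 / 2) ^ (2 * p + 1) * (1 / 4) ^ (p + 3) * (1 / 4) ≤
      (SignType.sign (Real.cos (M * Real.arccos ξ)) : ℝ) * localizedKernel p n M ξ x := by
  have hκ1 : (1 : ℝ) ≤ κ := mod_cast hκ
  have hX : 0 < 1 - ξ := lt_of_lt_of_le (by positivity) hξn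
  have hε : 1 / (32 * κ : ℝ) ≤ 1 / 32 := by gcongr; linarith
  have hxX : |x - ξ| ≤ (1 - ξ) / 2 := by
    have := mul_le_mul hε (sqrt_div_le_self hn hξn) (by positivity) (by norm_num)
    linarith
  obtain ⟨hlow, hhigh⟩ := abs_le.1 hxX
  have hxmem : x ∈ Icc (-1 : ℝ) 1 := ⟨by linarith, by linarith⟩
  have hangle := natCast_mul_abs_arccos_sub_arccos_le hn hξ0 (by linarith) hxmem hx
  have hT : 1 / 4 ≤ (SignType.sign (Real.cos (M * Real.arccos ξ)) : ℝ) * (T ℝ M).eval x := by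
    refine one_quarter_le_sign_mul hcosM ?_
    have hM' : (M : ℝ) ≤ 2 * κ * n := by rw [mul_assoc]; exact mod_cast hM
    calc |(T ℝ M).eval x - Real.cos (M * Real.arccos ξ)|
        ≤ M * |Real.arccos x - Real.arccos ξ| := abs_eval_T_sub_cos_le M hxmem _
      _ ≤ 2 * κ * n * |Real.arccos x - Real.arccos ξ| := by gcongr
      _ ≤ 2 * κ * (4 * (1 / (32 * κ))) := by rw [mul_assoc _ (n : ℝ)]; gcongr
      _ = 1 / 4 := by field_simp; norm_num
  have hR := one_quarter_le_eval_fejerPolynomial hn hxmem (θ₀ := Real.arccos ξ) (by linarith)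
  have hsqrt := half_le_sqrt_one_sub_sq_div hξ0 (by linarith) hxX
  calc (1 / 2 : ℝ) ^ (2 * p + 1) * (1 / 4) ^ (p + 3) * (1 / 4)
      ≤ (√(1 - x ^ 2) / √(1 - ξ)) ^ (2 * p + 1) *
          (fejerPolynomial n (Real.arccos ξ)).eval x ^ (p + 3) *
          ((SignType.sign (Real.cos (M * Real.arccos ξ)) : ℝ) * (T ℝ M).eval x) :=
        mul_le_mul (mul_le_mul (pow_le_pow_left₀ (by norm_num) hsqrt _)
          (pow_le_pow_left₀ (by norm_num) hR _) (by positivity) (by positivity)) hT (by norm_num)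
          (mul_nonneg (by positivity) (pow_nonneg (by linarith) _))
    _ = (SignType.sign (Real.cos (M * Real.arccos ξ)) : ℝ) * localizedKernel p n M ξ x := by
      rw [localizedKernel]
      ring

lemma isTestFunction_sign_mul_localizedKernel {α β a : ℝ} {p M : ℕ} (hα : 0 ≤ α) (hβ : 0 ≤ β)
    (hαp : α ≤ p + 1 / 2) (hβp : β ≤ p + 1 / 2) (hn : 1 ≤ n) (hξ0 : 0 ≤ ξ)
    (hξn : 1 / (n : ℝ) ^ 2 ≤ 1 - ξ) (hM : (3 * p + 7) * n ≤ M) :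
    IsTestFunction n (jacobi α β) ξ (√(1 - ξ) / n)
      (8 * 2 ^ (p + 1) * 4 ^ (p + 1) * 4 ^ (p + 3) / (1 - ξ) ^ β)
      (fun x => (SignType.sign a : ℝ) * localizedKernel p n M ξ x) where
  continuous := continuous_const.mul (continuous_localizedKernel p n M ξ)
  eq_zero x hx := by
    rw [localizedKernel_eq_zero p n M ξ fun h => hx (Ioo_subset_Icc_self h), mul_zero]
  integral_eval_mul Q hQ := by
    simp only [mul_left_comm (Q.eval _)]
    rw [integral_const_mul, integral_eval_mul_localizedKernel_eq_zero ξ (by nlinarith), mul_zero]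
  decay x hx := by
    have hξ1 : ξ ≤ 1 := by
      have : 0 ≤ 1 / (n : ℝ) ^ 2 := by positivity
      linarith
    have hsign : |(SignType.sign a : ℝ)| ≤ 1 := by
      rcases SignType.sign a <;> simp
    refine le_trans ?_ (abs_localizedKernel_mul_le M hα hβ hαp hβp hn ⟨by linarith, hξ1⟩ hξn hx)
    rw [abs_mul]
    gcongr
    exact mul_le_of_le_one_left (abs_nonneg _) hsign

lemma exists_isTestFunction_jacobi {α β : ℝ} (hα : 0 ≤ α) (hβ : 0 ≤ β) :
    ∃ C > 0, ∃ c > 0, ∃ ε > 0, ∀ n : ℕ, 1 ≤ n → ∀ ξ : ℝ, 0 ≤ ξ → 1 / (n : ℝ) ^ 2 ≤ 1 - ξ →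
      ∃ u : ℝ → ℝ, IsTestFunction n (jacobi α β) ξ (√(1 - ξ) / n) (C / (1 - ξ) ^ β) u ∧
        ∀ x, |x - ξ| ≤ ε * (√(1 - ξ) / n) → c ≤ u x := by
  obtain ⟨p, hp⟩ := exists_nat_ge (max α β)
  have hαp : α ≤ p + 1 / 2 := by linarith [le_max_left α β]
  have hβp : β ≤ p + 1 / 2 := by linarith [le_max_right α β]
  refine ⟨8 * 2 ^ (p + 1) * 4 ^ (p + 1) * 4 ^ (p + 3), by positivity,
    (1 / 2) ^ (2 * p + 1) * (1 / 4) ^ (p + 3) * (1 / 4), by positivity,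
    1 / (32 * (3 * p + 7 : ℕ)), by positivity, fun n hn ξ hξ0 hξn => ?_⟩
  obtain ⟨M, hlow, hhigh, hcosM⟩ :=
    exists_half_le_abs_cos_mul ((3 * p + 7) * n) (Real.arccos ξ)
  exact ⟨_, isTestFunction_sign_mul_localizedKernel hα hβ hαp hβp hn hξ0 hξn hlow,
    fun x hx => le_sign_mul_localizedKernel hn (by lia) hhigh hξ0 hξn hcosM hx⟩

end Kernel

namespace IsTestFunction

variable {n : ℕ} {w g : ℝ → ℝ} {ξ δ A : ℝ}

lemma hasCompactSupport (hg : IsTestFunction n w ξ δ A g) : HasCompactSupport g :=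
  HasCompactSupport.intro isCompact_Icc hg.eq_zero

lemma integrable_mul (hg : IsTestFunction n w ξ δ A g) {f : ℝ → ℝ}
    (hf : LocallyIntegrable f) : Integrable fun x => f x * g x := by
  simpa only [smul_eq_mul, mul_comm] using
    hf.integrable_smul_left_of_hasCompactSupport hg.continuous hg.hasCompactSupport

lemma mono {A' : ℝ} (hg : IsTestFunction n w ξ δ A g) (hw : ∀ x ∈ Icc (-1 : ℝ) 1, 0 ≤ w x)
    (hA : A ≤ A') : IsTestFunction n w ξ δ A' g where
  __ := hg
  decay x hx := (hg.decay x hx).trans (mul_le_mul_of_nonneg_right hA (hw x hx))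

lemma sum_mul {ι : Type*} {s : Finset ι} (a : ι → ℝ) {g : ι → ℝ → ℝ}
    (hg : ∀ i ∈ s, IsTestFunction n w ξ δ A (g i)) :
    IsTestFunction n w ξ δ ((∑ i ∈ s, |a i|) * A) (fun x => ∑ i ∈ s, a i * g i x) where
  continuous := continuous_finsetSum _ fun i hi => continuous_const.mul (hg i hi).continuous
  eq_zero x hx := Finset.sum_eq_zero fun i hi => by rw [(hg i hi).eq_zero x hx, mul_zero]
  integral_eval_mul Q hQ := by
    have hint (i) (hi : i ∈ s) : Integrable fun x => a i * (Q.eval x * g i x) :=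
      ((hg i hi).integrable_mul Q.continuous.locallyIntegrable).const_mul _
    simp only [Finset.mul_sum, mul_left_comm (Q.eval _)]
    rw [integral_finsetSum s hint]
    refine Finset.sum_eq_zero fun i hi => ?_
    rw [integral_const_mul, (hg i hi).integral_eval_mul Q hQ, mul_zero]
  decay x hx := by
    calc |∑ i ∈ s, a i * g i x| * (1 + ((x - ξ) / δ) ^ 2)
        ≤ (∑ i ∈ s, |a i| * |g i x|) * (1 + ((x - ξ) / δ) ^ 2) := by
          gcongr
          simpa only [abs_mul] using Finset.abs_sum_le_sum_abs (fun i => a i * g i x) s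
      _ = ∑ i ∈ s, |a i| * (|g i x| * (1 + ((x - ξ) / δ) ^ 2)) := by
        simp only [Finset.sum_mul, mul_assoc]
      _ ≤ ∑ i ∈ s, |a i| * (A * w x) :=
        Finset.sum_le_sum fun i hi =>
          mul_le_mul_of_nonneg_left ((hg i hi).decay x hx) (abs_nonneg _)
      _ = (∑ i ∈ s, |a i|) * A * w x := by rw [← Finset.sum_mul, mul_assoc]

end IsTestFunction

section Rescaling

open Polynomial

lemma integral_eval_mul_comp_affine_eq_zero {n : ℕ} {u : ℝ → ℝ} {l : ℝ} (hl : l ≠ 0) (b : ℝ)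
    (hu : ∀ Q : ℝ[X], Q.natDegree ≤ n → ∫ x, Q.eval x * u x = 0) {Q : ℝ[X]}
    (hQ : Q.natDegree ≤ n) : ∫ x, Q.eval x * u (x / l + b) = 0 := by
  set Q' := Q.comp (C l * (X - C b)) with hQ'
  have hdeg : Q'.natDegree ≤ n := by
    have hlin : (C l * (X - C b)).natDegree ≤ 1 := by compute_degree
    exact natDegree_comp_le.trans ((Nat.mul_le_mul_left _ hlin).trans (by linarith))
  have hQ'eval (x : ℝ) : Q'.eval (x / l + b) = Q.eval x := by
    simp only [hQ', eval_comp, eval_mul, eval_C, eval_sub, eval_X, add_sub_cancel_right,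
      mul_div_cancel₀ x hl]
  calc ∫ x, Q.eval x * u (x / l + b)
      = ∫ x, Q'.eval (x / l + b) * u (x / l + b) := by simp only [hQ'eval]
    _ = |l| • ∫ x, Q'.eval (x + b) * u (x + b) :=
      Measure.integral_comp_div (fun x => Q'.eval (x + b) * u (x + b)) l
    _ = 0 := by
      rw [integral_add_right_eq_self (fun x => Q'.eval x * u x) b, hu Q' hdeg, smul_zero]

lemma jacobi_le_mul_jacobi {α β x y b : ℝ} (hα : 0 ≤ α) (hβ : 0 ≤ β) (hb : 0 < b)
    (hx : x ∈ Icc (-1 : ℝ) 1) (hy : y ∈ Icc (-1 : ℝ) 1) (hleft : 1 + y ≤ b * (1 + x))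
    (hright : 1 - y ≤ b * (1 - x)) : jacobi α β y ≤ b ^ (α + β) * jacobi α β x := by
  have hx0 : 0 ≤ 1 + x := by linarith [hx.1]
  have hx1 : 0 ≤ 1 - x := by linarith [hx.2]
  have hy0 : 0 ≤ 1 + y := by linarith [hy.1]
  have hy1 : 0 ≤ 1 - y := by linarith [hy.2]
  calc jacobi α β y ≤ (b * (1 + x)) ^ α * (b * (1 - x)) ^ β := by unfold jacobi; gcongr
    _ = b ^ (α + β) * jacobi α β x := by
      rw [Real.mul_rpow hb.le hx0, Real.mul_rpow hb.le hx1, Real.rpow_add hb, jacobi]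
      ring

variable {n : ℕ} {α β ξ δ δ' A l s : ℝ} {u : ℝ → ℝ}

lemma jacobi_le_mul_jacobi_affine {x y : ℝ} (hα : 0 ≤ α) (hβ : 0 ≤ β) (hl : 3 / 4 ≤ l)
    (hs0 : 0 ≤ s) (hs : s ≤ 2 * (1 - l)) (hx : x ∈ Icc (-1 : ℝ) 1) (hy : y ∈ Icc (-1 : ℝ) 1)
    (hxy : x = l * (y + 1) - 1 + s) : jacobi α β y ≤ (4 / 3) ^ (α + β) * jacobi α β x := by
  have hleft := mul_le_mul_of_nonneg_right hl (by linarith [hy.1] : 0 ≤ 1 + y)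
  have hright := mul_le_mul_of_nonneg_right hl (by linarith [hy.2] : 0 ≤ 1 - y)
  exact jacobi_le_mul_jacobi hα hβ (by norm_num) hx hy (by linarith) (by linarith)

lemma one_add_sq_div_le {x y : ℝ} (hl0 : 0 ≤ l) (hl1 : l ≤ 1) (hs0 : 0 ≤ s) (hδ' : 0 < δ')
    (hδ'δ : δ' ≤ δ) (hsδ : s ≤ δ) (hxy : x = l * y + s) :
    1 + (x / δ) ^ 2 ≤ 3 * (1 + (y / δ') ^ 2) := by
  have hδ : 0 < δ := hδ'.trans_le hδ'δ
  have hx : x ^ 2 ≤ 2 * y ^ 2 + 2 * s ^ 2 := by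
    have : l ^ 2 * y ^ 2 ≤ y ^ 2 := mul_le_of_le_one_left (sq_nonneg y) (pow_le_one₀ hl0 hl1)
    rw [hxy]
    linarith [sq_nonneg (l * y - s)]
  have hsq : (s / δ) ^ 2 ≤ 1 := pow_le_one₀ (by positivity) ((div_le_one hδ).2 hsδ)
  have hy : (y / δ) ^ 2 ≤ (y / δ') ^ 2 := by
    rw [div_pow, div_pow]
    gcongr
  have : (x / δ) ^ 2 ≤ 2 * (y / δ) ^ 2 + 2 * (s / δ) ^ 2 := by
    simp only [div_pow]
    calc x ^ 2 / δ ^ 2 ≤ (2 * y ^ 2 + 2 * s ^ 2) / δ ^ 2 := by gcongr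
      _ = _ := by ring
  linarith [sq_nonneg (y / δ')]

lemma IsTestFunction.comp_affine (hu : IsTestFunction n (jacobi α β) ξ δ' A u) (hα : 0 ≤ α)
    (hβ : 0 ≤ β) (hA : 0 ≤ A) (hl : 3 / 4 ≤ l) (hs0 : 0 ≤ s) (hs : s ≤ 2 * (1 - l))
    (hδ' : 0 < δ') (hδ'δ : δ' ≤ δ) (hsδ : s ≤ δ) :
    IsTestFunction n (jacobi α β) (l * (ξ + 1) - 1) δ (3 * (4 / 3) ^ (α + β) * A)
      (fun x => u ((x - s + 1) / l - 1)) where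
  continuous := hu.continuous.comp (by fun_prop)
  eq_zero x hx := by
    refine hu.eq_zero _ fun hmem => hx ?_
    have hlow := (le_div_iff₀ (by linarith)).1 (by linarith [hmem.1] : 0 ≤ (x - s + 1) / l)
    have hhigh := (div_le_iff₀ (by linarith)).1 (by linarith [hmem.2] : (x - s + 1) / l ≤ 2)
    exact ⟨by linarith, by linarith⟩
  integral_eval_mul Q hQ := by
    convert integral_eval_mul_comp_affine_eq_zero (l := l) (by linarith) ((1 - s) / l - 1)
      hu.integral_eval_mul hQ using 5
    ring
  decay x hx := by
    have hl0 : 0 < l := by linarith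
    set y := (x - s + 1) / l - 1 with hy
    by_cases hymem : y ∈ Icc (-1 : ℝ) 1
    swap
    · rw [hu.eq_zero y hymem, abs_zero, zero_mul]
      exact mul_nonneg (by positivity) (jacobi_nonneg α β hx)
    have hxy : x = l * (y + 1) - 1 + s := by rw [hy]; field_simp; ring
    have hweight := jacobi_le_mul_jacobi_affine hα hβ hl hs0 hs hx hymem hxy
    have hscale := one_add_sq_div_le (x := x - (l * (ξ + 1) - 1)) (y := y - ξ)
      hl0.le (by linarith) hs0 hδ' hδ'δ hsδ (by rw [hxy]; ring)
    calc |u y| * (1 + ((x - (l * (ξ + 1) - 1)) / δ) ^ 2)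
        ≤ |u y| * (3 * (1 + ((y - ξ) / δ') ^ 2)) := by gcongr
      _ = 3 * (|u y| * (1 + ((y - ξ) / δ') ^ 2)) := by ring
      _ ≤ 3 * (A * ((4 / 3) ^ (α + β) * jacobi α β x)) := by
        have := (hu.decay y hymem).trans (mul_le_mul_of_nonneg_left hweight hA)
        linarith
      _ = 3 * (4 / 3) ^ (α + β) * A * jacobi α β x := by ring

end Rescaling

section Difference

/-- The antiderivative `t ↦ ∫_t^B v` of `-v` vanishing at `B`. -/
def tailIntegral (B : ℝ) (v : ℝ → ℝ) (t : ℝ) : ℝ := ∫ x in t..B, v x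

variable {v : ℝ → ℝ} {B h : ℝ}

lemma hasDerivAt_tailIntegral (hv : Continuous v) (B t : ℝ) :
    HasDerivAt (tailIntegral B v) (-v t) t :=
  intervalIntegral.integral_hasDerivAt_left (hv.intervalIntegrable t B)
    (hv.stronglyMeasurableAtFilter _ _) hv.continuousAt

lemma continuous_tailIntegral (hv : Continuous v) (B : ℝ) : Continuous (tailIntegral B v) :=
  continuous_iff_continuousAt.2 fun t => (hasDerivAt_tailIntegral hv B t).continuousAt

lemma continuous_tailIntegral_iterate (hv : Continuous v) (B : ℝ) (k : ℕ) :
    Continuous ((tailIntegral B)^[k] v) := by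
  induction k with
  | zero => exact hv
  | succ k ih =>
    rw [Function.iterate_succ_apply']
    exact continuous_tailIntegral ih B

lemma integral_sub_pow_succ_mul (hv : Continuous v) (B t : ℝ) (j : ℕ) :
    ∫ x in t..B, (x - t) ^ (j + 1) * v x =
      (j + 1) * ∫ x in t..B, (x - t) ^ j * tailIntegral B v x := by
  have hpow (x : ℝ) : HasDerivAt (fun x => (x - t) ^ (j + 1)) ((j + 1) * (x - t) ^ j) x := by
    simpa using ((hasDerivAt_id' x).sub_const t).fun_pow (j + 1)
  have parts := intervalIntegral.integral_mul_deriv_eq_deriv_mul (a := t) (b := B)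
    (fun x _ => hpow x) (fun x _ => hasDerivAt_tailIntegral hv B x)
    (Continuous.intervalIntegrable (by fun_prop) _ _) (hv.neg.intervalIntegrable _ _)
  simp only [tailIntegral, intervalIntegral.integral_same, sub_self, mul_zero, zero_sub,
    zero_pow j.succ_ne_zero, zero_mul, mul_neg, intervalIntegral.integral_neg, neg_inj,
    mul_assoc, intervalIntegral.integral_const_mul] at parts
  exact parts

lemma integral_sub_pow_mul_eq_factorial_mul (hv : Continuous v) (B t : ℝ) (j : ℕ) :
    ∫ x in t..B, (x - t) ^ j * v x = j.factorial * (tailIntegral B)^[j + 1] v t := by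
  induction j generalizing v with
  | zero => simp [tailIntegral]
  | succ j ih =>
    rw [integral_sub_pow_succ_mul hv, ih (continuous_tailIntegral hv B), Nat.factorial_succ,
      ← Function.iterate_succ_apply]
    push_cast
    ring

lemma hasDerivAt_fwdDiff_iterate {F F' : ℝ → ℝ} (hF : ∀ x, HasDerivAt F (F' x) x) (h : ℝ) (m : ℕ)
    (x : ℝ) : HasDerivAt ((fwdDiff h)^[m] F) ((fwdDiff h)^[m] F' x) x := by
  induction m generalizing x with
  | zero => exact hF x
  | succ m ih =>
    simp only [Function.iterate_succ_apply']
    exact ((ih (x + h)).comp_add_const x h).sub (ih x)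

lemma mul_pow_le_fwdDiff_neg_iterate_tailIntegral {c : ℝ} (hv : Continuous v) (hh : 0 < h)
    (B : ℝ) (k : ℕ) {ξ : ℝ} (hc : ∀ x ∈ Icc (ξ - k * h) ξ, c ≤ v x) :
    c * h ^ k ≤ (fwdDiff (-h))^[k] ((tailIntegral B)^[k] v) ξ := by
  induction k generalizing ξ with
  | zero => simpa using hc ξ (by simp)
  | succ k ih =>
    set F := (tailIntegral B)^[k] v with hF
    set G := (fwdDiff (-h))^[k] (tailIntegral B F) with hG
    have hderiv (x : ℝ) : HasDerivAt G (-(fwdDiff (-h))^[k] F x) x := by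
      have hneg : (fwdDiff (-h))^[k] (-F) x = -(fwdDiff (-h))^[k] F x := by
        simpa using congrFun (fwdDiff_iter_const_smul (h := -h) (-1 : ℝ) F k) x
      rw [← hneg]
      exact hasDerivAt_fwdDiff_iterate
        (hasDerivAt_tailIntegral (continuous_tailIntegral_iterate hv B k) B) _ _ _
    obtain ⟨η, hη, hslope⟩ := exists_hasDerivAt_eq_slope G _ (by linarith : ξ - h < ξ)
      (continuous_iff_continuousAt.2 fun x => (hderiv x).continuousAt).continuousOn
      fun x _ => hderiv x
    have hη_le : c * h ^ k ≤ (fwdDiff (-h))^[k] F η := by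
      refine ih fun x hx => hc x ⟨?_, hx.2.trans hη.2.le⟩
      push_cast
      linarith [hx.1, hη.1]
    rw [Function.iterate_succ_apply', Function.iterate_succ_apply', ← hF, ← hG, fwdDiff,
      ← sub_eq_add_neg]
    rw [sub_sub_cancel, eq_div_iff hh.ne'] at hslope
    calc c * h ^ (k + 1) = c * h ^ k * h := by ring
      _ ≤ (fwdDiff (-h))^[k] F η * h := by gcongr
      _ = G (ξ - h) - G ξ := by linarith

/-- The truncated power `(x - ξ)_+^j`, with the value `1` at `x = ξ` when `j = 0`. -/
def truncatedPower (j : ℕ) (ξ x : ℝ) : ℝ := if ξ ≤ x then (x - ξ) ^ j else 0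

lemma truncatedPower_add (j : ℕ) (ξ x s : ℝ) :
    truncatedPower j ξ (x + s) = truncatedPower j (ξ - s) x := by
  simp only [truncatedPower, sub_le_iff_le_add]
  ring_nf

lemma monotone_truncatedPower (j : ℕ) (ξ : ℝ) : Monotone (truncatedPower j ξ) := by
  intro x y hxy
  unfold truncatedPower
  split_ifs with hx hy hy
  · have := sub_nonneg.2 hx
    gcongr
  · exact absurd (hx.trans hxy) hy
  · exact pow_nonneg (sub_nonneg.2 hy) j
  · exact le_rfl

lemma integral_truncatedPower_mul (hv : Continuous v) (hvB : ∀ x, B < x → v x = 0) {ξ : ℝ}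
    (hξ : ξ ≤ B) (j : ℕ) :
    ∫ x, truncatedPower j ξ x * v x = j.factorial * (tailIntegral B)^[j + 1] v ξ := by
  calc ∫ x, truncatedPower j ξ x * v x
      = ∫ x in Ici ξ, (x - ξ) ^ j * v x := by
        rw [← integral_indicator measurableSet_Ici]
        congr 1 with x
        simp only [truncatedPower, ite_mul, zero_mul, indicator, mem_Ici]
    _ = ∫ x in Ioi ξ, (x - ξ) ^ j * v x := integral_Ici_eq_integral_Ioi
    _ = ∫ x in Ioc ξ B, (x - ξ) ^ j * v x := by
      refine setIntegral_eq_of_subset_of_forall_sdiff_eq_zero (s := Ioc ξ B) (t := Ioi ξ)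
        measurableSet_Ioi Ioc_subset_Ioi_self fun x hx => ?_
      rw [hvB x (not_le.1 fun hxB => hx.2 ⟨hx.1, hxB⟩), mul_zero]
    _ = ∫ x in ξ..B, (x - ξ) ^ j * v x := (intervalIntegral.integral_of_le hξ).symm
    _ = j.factorial * (tailIntegral B)^[j + 1] v ξ := integral_sub_pow_mul_eq_factorial_mul hv B ξ j

lemma integral_truncatedPower_mul_fwdDiff_iterate (hv : Continuous v) (hv' : HasCompactSupport v)
    (hvB : ∀ x, B < x → v x = 0) {ξ : ℝ} (hξ : ξ ≤ B) (hh : 0 ≤ h) (j k : ℕ) :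
    ∫ x, truncatedPower j ξ x * (fwdDiff (-h))^[k] v x =
      j.factorial * (fwdDiff (-h))^[k] ((tailIntegral B)^[j + 1] v) ξ := by
  have hshift (s : ℝ) (hs : 0 ≤ s) : ∫ x, truncatedPower j ξ x * v (x - s) =
      j.factorial * (tailIntegral B)^[j + 1] v (ξ - s) := by
    rw [← integral_truncatedPower_mul hv hvB (by linarith), ← integral_add_right_eq_self _ s]
    simp only [truncatedPower_add, add_sub_cancel_right]
  have hint (s : ℝ) : Integrable fun x => truncatedPower j ξ x * v (x - s) :=
    (monotone_truncatedPower j ξ).locallyIntegrable.integrable_smul_right_of_hasCompactSupport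
      (hv.comp (continuous_sub_right s)) (hv'.comp_homeomorph (Homeomorph.subRight s))
  simp only [fwdDiff_iter_eq_sum_shift, smul_neg, ← sub_eq_add_neg, nsmul_eq_mul, zsmul_eq_mul,
    Finset.mul_sum, mul_left_comm (truncatedPower j ξ _)]
  rw [integral_finsetSum _ fun i _ => (hint _).const_mul _]
  refine Finset.sum_congr rfl fun i _ => ?_
  rw [integral_const_mul, hshift _ (by positivity), mul_left_comm]

lemma mul_pow_le_integral_truncatedPower_mul_fwdDiff_iterate {c : ℝ} (hv : Continuous v)
    (hv' : HasCompactSupport v) (hvB : ∀ x, B < x → v x = 0) {ξ : ℝ} (hξ : ξ ≤ B) (hh : 0 < h)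
    (j : ℕ) (hc : ∀ x ∈ Icc (ξ - (j + 1 : ℕ) * h) ξ, c ≤ v x) :
    j.factorial * (c * h ^ (j + 1)) ≤
      ∫ x, truncatedPower j ξ x * (fwdDiff (-h))^[j + 1] v x := by
  rw [integral_truncatedPower_mul_fwdDiff_iterate hv hv' hvB hξ hh.le]
  gcongr
  exact mul_pow_le_fwdDiff_neg_iterate_tailIntegral hv hh B (j + 1) hc

end Difference

section Duality

lemma integrable_inv_one_add_sq_sub_div (ξ : ℝ) {δ : ℝ} (hδ : 0 < δ) :
    Integrable fun x : ℝ => (1 + ((x - ξ) / δ) ^ 2)⁻¹ :=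
  (integrable_inv_one_add_sq.comp_div hδ.ne').comp_sub_right ξ

lemma integral_inv_one_add_sq_sub_div (ξ : ℝ) {δ : ℝ} (hδ : 0 < δ) :
    ∫ x : ℝ, (1 + ((x - ξ) / δ) ^ 2)⁻¹ = Real.pi * δ := by
  rw [integral_sub_right_eq_self (fun x : ℝ => (1 + (x / δ) ^ 2)⁻¹) ξ,
    Measure.integral_comp_div (fun x : ℝ => (1 + x ^ 2)⁻¹) δ, integral_univ_inv_one_add_sq,
    abs_of_pos hδ, smul_eq_mul, mul_comm]

lemma one_sub_one_div_toReal_nonneg {q : ℝ≥0∞} (hq : 1 ≤ q) : 0 ≤ 1 - 1 / q.toReal := by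
  rcases eq_or_ne q ∞ with rfl | hq'
  · simp
  · have : 1 ≤ q.toReal := by simpa using ENNReal.toReal_mono hq' hq
    rw [sub_nonneg, div_le_one (by linarith)]
    exact this

lemma lintegral_enorm_mul_le_eLpNorm_mul_rpow {X : Type*} [MeasurableSpace X] {μ : Measure X}
    {q : ℝ≥0∞} (hq : 1 ≤ q) {ρ : X → ℝ≥0∞} (hρ : Measurable ρ) (hρ1 : ∀ x, ρ x ≤ 1) {F : X → ℝ}
    (hF : Measurable F) :
    ∫⁻ x, ρ x * ‖F x‖ₑ ∂μ ≤ eLpNorm F q μ * (∫⁻ x, ρ x ∂μ) ^ (1 - 1 / q.toReal) := by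
  have hle : μ.withDensity ρ ≤ μ :=
    (withDensity_mono (ae_of_all _ hρ1)).trans_eq withDensity_one
  calc ∫⁻ x, ρ x * ‖F x‖ₑ ∂μ = eLpNorm F 1 (μ.withDensity ρ) := by
        rw [eLpNorm_one_eq_lintegral_enorm,
          lintegral_withDensity_eq_lintegral_mul _ hρ hF.enorm]
        rfl
    _ ≤ eLpNorm F q (μ.withDensity ρ) * (μ.withDensity ρ) univ ^ (1 - 1 / q.toReal) := by
      simpa using eLpNorm_le_eLpNorm_mul_rpow_measure_univ (μ := μ.withDensity ρ) hq
        hF.aestronglyMeasurable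
    _ ≤ eLpNorm F q μ * (∫⁻ x, ρ x ∂μ) ^ (1 - 1 / q.toReal) := by
      rw [withDensity_apply _ MeasurableSet.univ, Measure.restrict_univ]
      gcongr

namespace IsTestFunction

variable {n : ℕ} {w f g : ℝ → ℝ} {ξ δ A : ℝ}

lemma enorm_mul_le (hg : IsTestFunction n w ξ δ A g) (hA : 0 ≤ A) {x : ℝ}
    (hx : x ∈ Icc (-1 : ℝ) 1) (y : ℝ) : ‖y * g x‖ₑ ≤
      ENNReal.ofReal A * (ENNReal.ofReal (1 + ((x - ξ) / δ) ^ 2)⁻¹ * ‖w x * y‖ₑ) := by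
  rw [← ofReal_norm, ← ofReal_norm, ← ENNReal.ofReal_mul (by positivity), ← ENNReal.ofReal_mul hA]
  refine ENNReal.ofReal_le_ofReal ?_
  have hgx : |g x| ≤ A * w x * (1 + ((x - ξ) / δ) ^ 2)⁻¹ := by
    rw [← div_eq_mul_inv, le_div_iff₀ (by positivity)]
    exact hg.decay x hx
  calc ‖y * g x‖ = |y| * |g x| := by rw [Real.norm_eq_abs, abs_mul]
    _ ≤ |y| * (A * |w x| * (1 + ((x - ξ) / δ) ^ 2)⁻¹) := by
      gcongr
      exact hgx.trans (by gcongr; exact le_abs_self _)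
    _ = A * ((1 + ((x - ξ) / δ) ^ 2)⁻¹ * ‖w x * y‖) := by
      rw [Real.norm_eq_abs, abs_mul]
      ring

lemma ofReal_integral_mul_le_LpOn (hg : IsTestFunction n w ξ δ A g) (hA : 0 ≤ A) (hδ : 0 < δ)
    (hw : Measurable w) (hf : Measurable f) {q : ℝ≥0∞} (hq : 1 ≤ q) :
    ENNReal.ofReal (∫ x, f x * g x) ≤
      ENNReal.ofReal A * (LpOn (fun x => w x * f x) q (-1) 1 *
        ENNReal.ofReal (Real.pi * δ) ^ (1 - 1 / q.toReal)) := by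
  set ρ : ℝ → ℝ≥0∞ := fun x => ENNReal.ofReal (1 + ((x - ξ) / δ) ^ 2)⁻¹
  have hρm : Measurable ρ := by fun_prop
  have hρ1 (x : ℝ) : ρ x ≤ 1 :=
    ENNReal.ofReal_le_one.2 (inv_le_one_of_one_le₀ (le_add_of_nonneg_right (sq_nonneg _)))
  have hρint : ∫⁻ x, ρ x = ENNReal.ofReal (Real.pi * δ) := by
    rw [← integral_inv_one_add_sq_sub_div ξ hδ, ofReal_integral_eq_lintegral_ofReal
      (integrable_inv_one_add_sq_sub_div ξ hδ) (ae_of_all _ fun x => by positivity)]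
  have hsupp : ∫ x in Icc (-1 : ℝ) 1, f x * g x = ∫ x, f x * g x :=
    setIntegral_eq_integral_of_forall_compl_eq_zero fun x hx => by rw [hg.eq_zero x hx, mul_zero]
  calc ENNReal.ofReal (∫ x, f x * g x) ≤ ‖∫ x in Icc (-1 : ℝ) 1, f x * g x‖ₑ := by
        rw [hsupp]
        exact Real.ofReal_le_enorm _
    _ ≤ ∫⁻ x in Icc (-1 : ℝ) 1, ‖f x * g x‖ₑ := enorm_integral_le_lintegral_enorm _
    _ ≤ ∫⁻ x in Icc (-1 : ℝ) 1, ENNReal.ofReal A * (ρ x * ‖w x * f x‖ₑ) :=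
      setLIntegral_mono' measurableSet_Icc fun x hx => hg.enorm_mul_le hA hx (f x)
    _ = ENNReal.ofReal A * ∫⁻ x in Icc (-1 : ℝ) 1, ρ x * ‖w x * f x‖ₑ :=
      lintegral_const_mul _ (by fun_prop)
    _ ≤ ENNReal.ofReal A * (LpOn (fun x => w x * f x) q (-1) 1 *
          (∫⁻ x in Icc (-1 : ℝ) 1, ρ x) ^ (1 - 1 / q.toReal)) := by
      gcongr
      exact lintegral_enorm_mul_le_eLpNorm_mul_rpow hq hρm hρ1 (hw.mul hf)
    _ ≤ ENNReal.ofReal A * (LpOn (fun x => w x * f x) q (-1) 1 *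
          ENNReal.ofReal (Real.pi * δ) ^ (1 - 1 / q.toReal)) := by
      rw [← hρint]
      gcongr
      · exact one_sub_one_div_toReal_nonneg hq
      · exact Measure.restrict_le_self

lemma ofReal_integral_mul_le_En (hg : IsTestFunction n w ξ δ A g) (hA : 0 < A) (hδ : 0 < δ)
    (hw : Measurable w) (hf : Measurable f) (hf' : LocallyIntegrable f) {q : ℝ≥0∞} (hq : 1 ≤ q) :
    ENNReal.ofReal (∫ x, f x * g x) ≤
      ENNReal.ofReal A * ENNReal.ofReal (Real.pi * δ) ^ (1 - 1 / q.toReal) * En n f w q := by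
  have hδ_pow : 0 < ENNReal.ofReal (Real.pi * δ) ^ (1 - 1 / q.toReal) :=
    ENNReal.rpow_pos (ENNReal.ofReal_pos.2 (by positivity)) ENNReal.ofReal_ne_top
  have hne_zero := mul_ne_zero (ENNReal.ofReal_pos.2 hA).ne' hδ_pow.ne'
  have hne_top := ENNReal.mul_ne_top (ENNReal.ofReal_ne_top (r := A))
    (ENNReal.rpow_ne_top_of_nonneg (one_sub_one_div_toReal_nonneg hq)
      (ENNReal.ofReal_ne_top (r := Real.pi * δ)))
  simp only [En, ENNReal.mul_iInf_of_ne hne_zero hne_top]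
  refine le_iInf₂ fun P hP => ?_
  have horth : ∫ x, f x * g x = ∫ x, (f x - P.eval x) * g x := by
    simp only [sub_mul]
    rw [integral_sub (hg.integrable_mul hf') (hg.integrable_mul P.continuous.locallyIntegrable),
      hg.integral_eval_mul P hP, sub_zero]
  rw [horth, mul_assoc, mul_comm (_ ^ _)]
  exact hg.ofReal_integral_mul_le_LpOn hA.le hδ hw (hf.sub P.continuous.measurable) hq

end IsTestFunction

end Duality

section LowerBound

lemma measurable_jacobi (α β : ℝ) : Measurable (jacobi α β) := by
  unfold jacobi
  fun_prop

lemma sum_abs_neg_one_pow_mul_choose (k : ℕ) :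
    ∑ i ∈ Finset.range (k + 1), |(-1 : ℝ) ^ (k - i) * k.choose i| = 2 ^ k := by
  simp only [abs_mul, abs_pow, abs_neg, abs_one, one_pow, one_mul, Nat.abs_cast]
  exact_mod_cast Nat.sum_range_choose k

lemma IsTestFunction.fwdDiff_iterate_comp_affine {n k : ℕ} {α β ξ δ δ' A l h : ℝ} {u : ℝ → ℝ}
    (hu : IsTestFunction n (jacobi α β) ξ δ' A u) (hα : 0 ≤ α) (hβ : 0 ≤ β) (hA : 0 ≤ A)
    (hl : 3 / 4 ≤ l) (hh : 0 ≤ h) (hkh : k * h ≤ 2 * (1 - l)) (hδ' : 0 < δ') (hδ'δ : δ' ≤ δ)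
    (hkhδ : k * h ≤ δ) :
    IsTestFunction n (jacobi α β) (l * (ξ + 1) - 1) δ (2 ^ k * (3 * (4 / 3) ^ (α + β) * A))
      ((fwdDiff (-h))^[k] fun x => u ((x + 1) / l - 1)) := by
  have hshift (i) (hi : i ∈ Finset.range (k + 1)) :
      IsTestFunction n (jacobi α β) (l * (ξ + 1) - 1) δ (3 * (4 / 3) ^ (α + β) * A)
        (fun x => u ((x - i * h + 1) / l - 1)) := by
    have hik : i * h ≤ k * h := by
      gcongr
      exact Finset.mem_range_succ_iff.1 hi
    exact hu.comp_affine hα hβ hA hl (by positivity) (hik.trans hkh) hδ' hδ'δ (hik.trans hkhδ)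
  convert IsTestFunction.sum_mul (fun i => (-1 : ℝ) ^ (k - i) * k.choose i) hshift using 1
  · rw [sum_abs_neg_one_pow_mul_choose]
  · ext x
    simp [fwdDiff_iter_eq_sum_shift, sub_eq_add_neg]

lemma le_affine_preimage {ξ m : ℝ} (hξ : -1 ≤ ξ) (hm0 : 0 ≤ m) (hm : m < 2) :
    ξ ≤ (ξ + 1) / (1 - m / 2) - 1 := by
  rw [le_sub_iff_add_le, le_div_iff₀ (by linarith)]
  exact mul_le_of_le_one_right (by linarith) (by linarith)

lemma half_one_sub_le_one_sub_affine_preimage {ξ m : ℝ} (hξ : -1 ≤ ξ) (hξ1 : ξ ≤ 1)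
    (hm : m ≤ (1 - ξ) / 4) : (1 - ξ) / 2 ≤ 1 - ((ξ + 1) / (1 - m / 2) - 1) := by
  have hprod : (3 + ξ) * m ≤ 4 * ((1 - ξ) / 4) := by
    refine (mul_le_mul_of_nonneg_left hm (by linarith)).trans ?_
    gcongr
    linarith
  have : (ξ + 1) / (1 - m / 2) ≤ (3 + ξ) / 2 := by
    rw [div_le_iff₀ (by linarith)]
    linarith
  linarith

lemma abs_affine_preimage_sub_le {x ξ l m : ℝ} (hl : 3 / 4 ≤ l) (hx : x ∈ Icc (ξ - m) ξ) :
    |(x + 1) / l - 1 - ((ξ + 1) / l - 1)| ≤ 4 / 3 * m := by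
  have hxξ : |x - ξ| ≤ m := abs_le.2 ⟨by linarith [hx.1], by linarith [hx.1, hx.2]⟩
  have hl0 : 0 < l := by linarith
  calc |(x + 1) / l - 1 - ((ξ + 1) / l - 1)| = |x - ξ| / l := by
        rw [← abs_of_pos hl0, ← abs_div, abs_of_pos hl0]
        ring_nf
    _ ≤ m / (3 / 4) := by gcongr; exact (abs_nonneg _).trans hxξ
    _ = 4 / 3 * m := by ring

variable {n : ℕ} {α β : ℝ}

-- Shrinking `[-1, 1]` towards `-1` by the factor `l` leaves room for the `j + 1` shifts by `h`.
lemma IsTestFunction.exists_le_integral_truncatedPower_mul {j : ℕ} {ξ δ δ' A c h l : ℝ}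
    {u : ℝ → ℝ} (hu : IsTestFunction n (jacobi α β) ((ξ + 1) / l - 1) δ' A u)
    (hc : ∀ x, |x - ((ξ + 1) / l - 1)| ≤ 4 / 3 * ((j + 1 : ℕ) * h) → c ≤ u x) (hα : 0 ≤ α)
    (hβ : 0 ≤ β) (hA : 0 ≤ A) (hξ : ξ ≤ 1) (hh : 0 < h) (hl : 3 / 4 ≤ l)
    (hhl : (j + 1 : ℕ) * h ≤ 2 * (1 - l)) (hδ' : 0 < δ') (hδ'δ : δ' ≤ δ)
    (hhδ : (j + 1 : ℕ) * h ≤ δ) :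
    ∃ g, IsTestFunction n (jacobi α β) ξ δ (2 ^ (j + 1) * (3 * (4 / 3) ^ (α + β) * A)) g ∧
      j.factorial * (c * h ^ (j + 1)) ≤ ∫ x, truncatedPower j ξ x * g x := by
  have hξl : l * ((ξ + 1) / l - 1 + 1) - 1 = ξ := by
    have : l ≠ 0 := by linarith
    field_simp
    ring
  have hdiff := hu.fwdDiff_iterate_comp_affine hα hβ hA hl hh.le hhl hδ' hδ'δ hhδ
  rw [hξl] at hdiff
  have hl1 : 0 ≤ 2 * (1 - l) := le_trans (by positivity) hhl
  have hv := hu.comp_affine hα hβ hA hl le_rfl hl1 hδ' hδ'δ (hδ'.le.trans hδ'δ)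
  simp only [sub_zero] at hv
  exact ⟨_, hdiff, mul_pow_le_integral_truncatedPower_mul_fwdDiff_iterate hv.continuous
    hv.hasCompactSupport (fun x hx => hv.eq_zero x fun hmem => hmem.2.not_gt hx) hξ hh j
    fun x hx => hc _ (abs_affine_preimage_sub_le hl hx)⟩

lemma exists_isTestFunction_affine_preimage (hα : 0 ≤ α) (hβ : 0 ≤ β) :
    ∃ C > 0, ∃ c > 0, ∃ ε > 0, ∀ n : ℕ, 1 ≤ n → ∀ ξ : ℝ, 0 ≤ ξ → 2 / (n : ℝ) ^ 2 ≤ 1 - ξ →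
      ∀ m : ℝ, 0 ≤ m → m ≤ (1 - ξ) / 4 → ∃ u : ℝ → ℝ, ∃ δ' : ℝ, 0 < δ' ∧ δ' ≤ √(1 - ξ) / n ∧
        IsTestFunction n (jacobi α β) ((ξ + 1) / (1 - m / 2) - 1) δ' (C / (1 - ξ) ^ β) u ∧
        ∀ x, |x - ((ξ + 1) / (1 - m / 2) - 1)| ≤ ε * (√(1 - ξ) / n) → c ≤ u x := by
  obtain ⟨C, hC, c, hc, ε, hε, hkernel⟩ := exists_isTestFunction_jacobi hα hβ
  refine ⟨C * 2 ^ β, by positivity, c, hc, ε / 2, by positivity, fun n hn ξ hξ0 hξn m hm0 hm => ?_⟩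
  have hn2 : 0 < 1 / (n : ℝ) ^ 2 := by positivity
  rw [← mul_one_div] at hξn
  have hξξ' := le_affine_preimage (by linarith : -1 ≤ ξ) hm0 (by linarith)
  have hhalf := half_one_sub_le_one_sub_affine_preimage (by linarith) (by linarith) hm
  set ξ' := (ξ + 1) / (1 - m / 2) - 1
  obtain ⟨u, hu, hcu⟩ := hkernel n hn ξ' (by linarith) (by linarith)
  have hξ'0 : 0 < 1 - ξ' := by linarith
  refine ⟨u, √(1 - ξ') / n, by positivity, by gcongr,
    hu.mono (fun x hx => jacobi_nonneg α β hx) ?_, fun x hx => hcu x (hx.trans ?_)⟩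
  · rw [mul_div_assoc, div_eq_mul_inv, ← Real.inv_rpow hξ'0.le,
      ← Real.div_rpow zero_le_two (by linarith)]
    gcongr
    rw [← inv_div]
    exact inv_anti₀ (by linarith) hhalf
  · have hsqrt : √(1 - ξ) ≤ 2 * √(1 - ξ') := by
      rw [Real.sqrt_le_left (by positivity), mul_pow, Real.sq_sqrt hξ'0.le]
      linarith
    calc ε / 2 * (√(1 - ξ) / n) ≤ ε / 2 * (2 * √(1 - ξ') / n) := by gcongr
      _ = ε * (√(1 - ξ') / n) := by ring

lemma exists_isTestFunction_le_integral_truncatedPower_mul (j : ℕ) (hα : 0 ≤ α) (hβ : 0 ≤ β) :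
    ∃ C > 0, ∃ c > 0, ∀ n : ℕ, 1 ≤ n → ∀ ξ : ℝ, 0 ≤ ξ → 2 / (n : ℝ) ^ 2 ≤ 1 - ξ →
      ∃ g : ℝ → ℝ, IsTestFunction n (jacobi α β) ξ (√(1 - ξ) / n) (C / (1 - ξ) ^ β) g ∧
        c * (√(1 - ξ) / n) ^ (j + 1) ≤ ∫ x, truncatedPower j ξ x * g x := by
  obtain ⟨C, hC, c, hc, ε, hε, hkernel⟩ := exists_isTestFunction_affine_preimage hα hβ
  set η := min ε 1 / (4 * (j + 1 : ℕ)) with hη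
  refine ⟨2 ^ (j + 1) * (3 * (4 / 3) ^ (α + β) * C), by positivity,
    j.factorial * (c * η ^ (j + 1)), by positivity, fun n hn ξ hξ0 hξn => ?_⟩
  have hξ : 0 < 1 - ξ := lt_of_lt_of_le (by positivity) hξn
  have hδξ : √(1 - ξ) / n ≤ 1 - ξ :=
    sqrt_div_le_self hn (le_trans (by gcongr; norm_num) hξn)
  set δ := √(1 - ξ) / n
  have hδ0 : 0 < δ := by positivity
  have hm : (j + 1 : ℕ) * (η * δ) = min ε 1 * δ / 4 := by
    rw [hη]
    field_simp
  have hmδ : min ε 1 * δ ≤ δ := mul_le_of_le_one_left hδ0.le (min_le_right ε 1)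
  have hmε : min ε 1 * δ ≤ ε * δ := mul_le_mul_of_nonneg_right (min_le_left ε 1) hδ0.le
  obtain ⟨u, δ', hδ'0, hδ'δ, hu, hcu⟩ :=
    hkernel n hn ξ hξ0 hξn (min ε 1 * δ / 4) (by positivity) (by linarith)
  obtain ⟨g, hg, hpair⟩ := hu.exists_le_integral_truncatedPower_mul (j := j) (h := η * δ)
    (fun x hx => hcu x (by linarith [mul_pos hε hδ0])) hα hβ (by positivity) (by linarith)
    (by positivity) (by linarith) (by linarith) hδ'0 hδ'δ (by linarith)
  refine ⟨g, by convert hg using 1; ring, le_of_eq_of_le ?_ hpair⟩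
  ring

lemma rpow_sqrt_div {X N : ℝ} (hX : 0 ≤ X) (hN : 0 ≤ N) (s : ℝ) :
    (√X / N) ^ s = N ^ (-s) * X ^ (s / 2) := by
  rw [Real.div_rpow (Real.sqrt_nonneg X) hN, Real.sqrt_eq_rpow, ← Real.rpow_mul hX,
    Real.rpow_neg hN, div_eq_inv_mul, one_div_mul_eq_div]

lemma ofReal_mul_rpow_le_En {n j : ℕ} {α β ξ C c : ℝ} {g : ℝ → ℝ} {q : ℝ≥0∞} (hq : 1 ≤ q)
    (hn : 1 ≤ n) (hξ : ξ < 1) (hC : 0 < C)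
    (hg : IsTestFunction n (jacobi α β) ξ (√(1 - ξ) / n) (C / (1 - ξ) ^ β) g)
    (hc : c * (√(1 - ξ) / n) ^ (j + 1) ≤ ∫ x, truncatedPower j ξ x * g x) :
    ENNReal.ofReal (c / (C * Real.pi ^ (1 - 1 / q.toReal)) * (n : ℝ) ^ (-(j + 1 / q.toReal)) *
        (1 - ξ) ^ (β + (j + 1 / q.toReal) / 2)) ≤
      En n (truncatedPower j ξ) (jacobi α β) q := by
  set r := 1 / q.toReal with hr
  set δ := √(1 - ξ) / n
  have hξ0 : 0 < 1 - ξ := sub_pos.2 hξ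
  have hδ0 : 0 < δ := by positivity
  have hmono := monotone_truncatedPower j ξ
  have hpair := (ENNReal.ofReal_le_ofReal hc).trans <| hg.ofReal_integral_mul_le_En
    (by positivity) hδ0 (measurable_jacobi α β) hmono.measurable hmono.locallyIntegrable hq
  rw [ENNReal.ofReal_rpow_of_pos (by positivity), ← ENNReal.ofReal_mul (by positivity),
    mul_comm _ (En _ _ _ _)] at hpair
  have hdiv := ENNReal.div_le_of_le_mul hpair
  rw [← ENNReal.ofReal_div_of_pos (by positivity)] at hdiv
  refine le_of_eq_of_le (congrArg _ ?_) hdiv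
  have hδpow : δ ^ (j + 1) = δ ^ (j + r) * δ ^ (1 - r) := by
    rw [← Real.rpow_add hδ0, ← Real.rpow_natCast]
    push_cast
    ring_nf
  rw [hδpow, Real.mul_rpow Real.pi_pos.le hδ0.le, rpow_sqrt_div hξ0.le n.cast_nonneg,
    Real.rpow_add hξ0, ← hr]
  field_simp

end LowerBound

theorem statement18_general (q : ℝ≥0∞) (hq : 1 ≤ q) (k : ℕ) (hk : 1 ≤ k) (α β : ℝ)
    (hα : 0 ≤ α) (hβ : 0 ≤ β) :
    ∃ c > (0 : ℝ), ∀ n : ℕ, 1 ≤ n → ∀ ξ : ℝ, 0 ≤ ξ → ξ ≤ 1 - 2 / (n : ℝ) ^ 2 →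
      ENNReal.ofReal (c * (n : ℝ) ^ (-(k : ℝ) + 1 - 1 / q.toReal) *
          (1 - ξ) ^ (β + ((k : ℝ) - 1) / 2 + 1 / (2 * q.toReal))) ≤
        En n (fun x => if ξ ≤ x then (x - ξ) ^ (k - 1) else 0) (jacobi α β) q := by
  obtain ⟨j, rfl⟩ := Nat.exists_eq_add_of_le' hk
  obtain ⟨C, hC, c, hc, htest⟩ := exists_isTestFunction_le_integral_truncatedPower_mul j hα hβ
  refine ⟨c / (C * Real.pi ^ (1 - 1 / q.toReal)), by positivity, fun n hn ξ hξ0 hξn => ?_⟩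
  have hξ : ξ < 1 := hξn.trans_lt (sub_lt_self 1 (by positivity))
  obtain ⟨g, hg, hpair⟩ := htest n hn ξ hξ0 (by linarith)
  have hnpow : -((j + 1 : ℕ) : ℝ) + 1 - 1 / q.toReal = -(j + 1 / q.toReal) := by
    push_cast
    ring
  have hξpow : β + (((j + 1 : ℕ) : ℝ) - 1) / 2 + 1 / (2 * q.toReal) =
      β + (j + 1 / q.toReal) / 2 := by
    rw [mul_comm 2, ← div_div]
    push_cast
    ring
  rw [hnpow, hξpow]
  exact ofReal_mul_rpow_le_En hq hn hξ hC hg hpair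

theorem statement18 (q : ℝ≥0∞) (hq : 1 ≤ q) (k : ℕ) (hk : 1 ≤ k) (α β : ℝ)
    (hα : 0 ≤ α) (hβ : 0 ≤ β) :
    ∃ c > (0 : ℝ), ∀ n : ℕ, 2 * k ≤ n → ∀ ξ : ℝ, 0 ≤ ξ →
      ξ ≤ 1 - 2 * (k : ℝ) ^ 2 / (n : ℝ) ^ 2 →
      ENNReal.ofReal (c * (n : ℝ) ^ (-(k : ℝ) + 1 - 1 / q.toReal) *
          (1 - ξ) ^ (β + ((k : ℝ) - 1) / 2 + 1 / (2 * q.toReal))) ≤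
        En n (fun x => if ξ ≤ x then (x - ξ) ^ (k - 1) else 0) (jacobi α β) q := by
  obtain ⟨c, hc, hbound⟩ := statement18_general q hq k hk α β hα hβ
  refine ⟨c, hc, fun n hn ξ hξ0 hξn => hbound n (by lia) ξ hξ0 (hξn.trans ?_)⟩
  gcongr
  exact le_mul_of_one_le_right zero_le_two (one_le_pow₀ (mod_cast hk))
end
end

section
/- Let 1 ≤ p ≤ ∞, r ∈ ℕ₀, α, β ∈ ℝ, and let f ∈ W_{p,r+1}^{α,β}. Then for any γ < 1 such that α − γ ∈ J_p and β − γ ∈ J_p, one has f ∈ W_{p,r}^{α−γ, β−γ}. Moreover, if in addition f^{(r)}(0) = 0, then there is a constant c > 0, depending only on p, α, β, γ, such that ‖w_{α−γ, β−γ}·f^{(r)}‖_p ≤ c·‖w_{α,β}·f^{(r+1)}‖_p. -/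
open MeasureTheory Set Filter
open scoped ENNReal

noncomputable section

/-- Membership in `W_{p,r}^{α,β}`: for `r ≥ 1`, the derivatives up to order `r-1` are
(locally) absolutely continuous on `(-1,1)`, expressed via the fundamental theorem of
calculus with locally integrable derivatives, and `‖w_{α,β} f^{(r)}‖_p < ∞`. -/
def MemWpr (p : ℝ≥0∞) (r : ℕ) (α β : ℝ) (f : ℝ → ℝ) : Prop :=
  Measurable f ∧
  (∀ j, j ≤ r → ∀ a b : ℝ, a ∈ Ioo (-1 : ℝ) 1 → b ∈ Ioo (-1 : ℝ) 1 →
    IntervalIntegrable (iteratedDeriv j f) volume a b) ∧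
  (∀ j, j < r → ∀ x ∈ Ioo (-1 : ℝ) 1,
    iteratedDeriv j f x = iteratedDeriv j f 0 + ∫ t in (0 : ℝ)..x, iteratedDeriv (j + 1) f t) ∧
  LpOn (fun x => jacobi α β x * iteratedDeriv r f x) p (-1) 1 ≠ ⊤

/-! Writing `f^{(r)}(x) - f^{(r)}(0) = ∫₀ˣ f^{(r+1)}` and `u = 1 - x` near the endpoint `1`, the
Jacobi weight is comparable to a power of `u`, and the claim on `[0, 1]` becomes Hardy's inequality
`‖u^a ∫_u^∞ G‖_p ≤ (a + 1/p)⁻¹ ‖v^(a+1) G‖_p` for `a > -1/p`: apply Jensen to the inner integral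
with the weight `v^(-δ-1)`, `δ = a + 1/p`, and exchange the order of integration. For `p = ∞` the
bound comes from `∫₀¹ v^(-γ) < ∞`. The interval `[-1, 0]` is the reflection of `[0, 1]`, and
constants lie in the weighted space because both exponents are in `J_p`. -/

theorem rpow_lintegral_mul_le {X : Type*} [MeasurableSpace X] {μ : Measure X} {w k : X → ℝ≥0∞}
    (hw : AEMeasurable w μ) (hk : AEMeasurable k μ) {q : ℝ} (hq : 1 ≤ q) :
    (∫⁻ x, w x * k x ∂μ) ^ q ≤ (∫⁻ x, w x ∂μ) ^ (q - 1) * ∫⁻ x, w x * k x ^ q ∂μ := by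
  have hq0 : 0 < q := one_pos.trans_le hq
  have hk' := hk.mono_ac (withDensity_absolutelyContinuous μ w)
  have comparison := eLpNorm'_le_eLpNorm'_mul_rpow_measure_univ one_pos hq hk'.aestronglyMeasurable
  simp only [eLpNorm'_eq_lintegral_enorm, enorm_eq_self, ENNReal.rpow_one, div_one,
    withDensity_apply _ MeasurableSet.univ, setLIntegral_univ,
    lintegral_withDensity_eq_lintegral_mul₀ hw hk,
    lintegral_withDensity_eq_lintegral_mul₀ hw (hk.pow_const q), Pi.mul_apply] at comparison
  calc (∫⁻ x, w x * k x ∂μ) ^ q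
      ≤ ((∫⁻ x, w x * k x ^ q ∂μ) ^ (1 / q) * (∫⁻ x, w x ∂μ) ^ (1 - 1 / q)) ^ q :=
        ENNReal.rpow_le_rpow comparison hq0.le
    _ = (∫⁻ x, w x ∂μ) ^ (q - 1) * ∫⁻ x, w x * k x ^ q ∂μ := by
        rw [ENNReal.mul_rpow_of_nonneg _ _ hq0.le, ← ENNReal.rpow_mul, ← ENNReal.rpow_mul,
          one_div_mul_cancel hq0.ne', ENNReal.rpow_one, sub_mul, one_div_mul_cancel hq0.ne',
          one_mul, mul_comm]

theorem lintegral_Ioi_lintegral_Ioi_swap {X : Type*} [LinearOrder X] [TopologicalSpace X]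
    [OrderClosedTopology X] [SecondCountableTopology X] [MeasurableSpace X]
    [OpensMeasurableSpace X] {μ ν : Measure X} [SFinite μ] [SFinite ν] (a : X)
    {F : X → X → ℝ≥0∞} (hF : Measurable (Function.uncurry F)) :
    ∫⁻ u in Ioi a, ∫⁻ v in Ioi u, F u v ∂ν ∂μ = ∫⁻ v in Ioi a, ∫⁻ u in Ioo a v, F u v ∂μ ∂ν := by
  have measurable_below_diag : Measurable
      (Function.uncurry fun u v : X => (Ioi u).indicator (F u) v) :=
    hF.indicator (measurableSet_lt measurable_fst measurable_snd)
  calc ∫⁻ u in Ioi a, ∫⁻ v in Ioi u, F u v ∂ν ∂μ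
      = ∫⁻ u in Ioi a, ∫⁻ v in Ioi a, (Ioi u).indicator (F u) v ∂ν ∂μ := by
        refine setLIntegral_congr_fun measurableSet_Ioi fun u hu => ?_
        simp only [setLIntegral_indicator measurableSet_Ioi,
          inter_eq_self_of_subset_left (Ioi_subset_Ioi (le_of_lt hu))]
    _ = ∫⁻ v in Ioi a, ∫⁻ u in Ioi a, (Ioi u).indicator (F u) v ∂μ ∂ν :=
        lintegral_lintegral_swap measurable_below_diag.aemeasurable
    _ = ∫⁻ v in Ioi a, ∫⁻ u in Ioo a v, F u v ∂μ ∂ν := by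
        refine lintegral_congr fun v => ?_
        rw [← Iio_inter_Ioi, ← setLIntegral_indicator measurableSet_Iio]
        rfl

theorem eLpNorm_add_measure_le {X ε : Type*} [MeasurableSpace X] [ENorm ε] {p : ℝ≥0∞}
    (hp : 1 ≤ p) (f : X → ε) (μ ν : Measure X) :
    eLpNorm f p (μ + ν) ≤ eLpNorm f p μ + eLpNorm f p ν := by
  rcases eq_or_ne p ∞ with rfl | hp_top
  · simp only [eLpNorm_exponent_top]
    exact essSup_le_of_ae_le _ (ae_add_measure_iff.2
      ⟨ae_le_eLpNormEssSup.mono fun _ h => h.trans le_self_add,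
        ae_le_eLpNormEssSup.mono fun _ h => h.trans le_add_self⟩)
  · have hp0 : p ≠ 0 := (one_pos.trans_le hp).ne'
    have one_le_toReal : 1 ≤ p.toReal := by simpa using ENNReal.toReal_mono hp_top hp
    simp only [eLpNorm_eq_lintegral_rpow_enorm_toReal hp0 hp_top, lintegral_add_measure]
    exact ENNReal.rpow_add_le_add_rpow _ _ (by positivity)
      ((div_le_one₀ (by positivity)).2 one_le_toReal)

theorem lintegral_Ioi_ofReal_rpow_neg_sub_one {δ : ℝ} (hδ : 0 < δ) {u : ℝ} (hu : 0 < u) :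
    ∫⁻ v in Ioi u, ENNReal.ofReal v ^ (-δ - 1) =
      ENNReal.ofReal δ⁻¹ * ENNReal.ofReal u ^ (-δ) := by
  have rpow_nonneg : ∀ᵐ v ∂volume.restrict (Ioi u), 0 ≤ v ^ (-δ - 1) :=
    ae_restrict_of_forall_mem measurableSet_Ioi fun v hv => Real.rpow_nonneg (hu.trans hv).le _
  calc ∫⁻ v in Ioi u, ENNReal.ofReal v ^ (-δ - 1)
      = ∫⁻ v in Ioi u, ENNReal.ofReal (v ^ (-δ - 1)) :=
        setLIntegral_congr_fun measurableSet_Ioi fun v hv =>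
          ENNReal.ofReal_rpow_of_pos (hu.trans hv)
    _ = ENNReal.ofReal (δ⁻¹ * u ^ (-δ)) := by
        rw [← ofReal_integral_eq_lintegral_ofReal
          (integrableOn_Ioi_rpow_of_lt (by linarith) hu) rpow_nonneg,
          integral_Ioi_rpow_of_lt (by linarith) hu, sub_add_cancel, neg_div_neg_eq, div_eq_inv_mul]
    _ = ENNReal.ofReal δ⁻¹ * ENNReal.ofReal u ^ (-δ) := by
        rw [ENNReal.ofReal_mul (by positivity), ENNReal.ofReal_rpow_of_pos hu]

theorem lintegral_Ioo_ofReal_rpow_sub_one {δ : ℝ} (hδ : 0 < δ) {v : ℝ} (hv : 0 < v) :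
    ∫⁻ u in Ioo 0 v, ENNReal.ofReal u ^ (δ - 1) = ENNReal.ofReal δ⁻¹ * ENNReal.ofReal v ^ δ := by
  have rpow_nonneg : ∀ᵐ u ∂volume.restrict (Ioo 0 v), 0 ≤ u ^ (δ - 1) :=
    ae_restrict_of_forall_mem measurableSet_Ioo fun u hu => Real.rpow_nonneg hu.1.le _
  have integrable : IntegrableOn (fun u : ℝ => u ^ (δ - 1)) (Ioo 0 v) :=
    (intervalIntegral.integrableOn_Ioo_rpow_iff hv).2 (by linarith)
  calc ∫⁻ u in Ioo 0 v, ENNReal.ofReal u ^ (δ - 1)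
      = ∫⁻ u in Ioo 0 v, ENNReal.ofReal (u ^ (δ - 1)) :=
        setLIntegral_congr_fun measurableSet_Ioo fun u hu => ENNReal.ofReal_rpow_of_pos hu.1
    _ = ENNReal.ofReal (δ⁻¹ * v ^ δ) := by
        rw [← ofReal_integral_eq_lintegral_ofReal integrable rpow_nonneg,
          ← integral_Ioc_eq_integral_Ioo, ← intervalIntegral.integral_of_le hv.le,
          integral_rpow (Or.inl (by linarith)), sub_add_cancel, Real.zero_rpow hδ.ne', sub_zero,
          div_eq_inv_mul]
    _ = ENNReal.ofReal δ⁻¹ * ENNReal.ofReal v ^ δ := by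
        rw [ENNReal.ofReal_mul (by positivity), ENNReal.ofReal_rpow_of_pos hv]

theorem ofReal_rpow_mul_ofReal_rpow {u : ℝ} (hu : 0 < u) (a b : ℝ) :
    ENNReal.ofReal u ^ a * ENNReal.ofReal u ^ b = ENNReal.ofReal u ^ (a + b) :=
  (ENNReal.rpow_add a b (ENNReal.ofReal_pos.2 hu).ne' ENNReal.ofReal_ne_top).symm

theorem measurable_ofReal_rpow (a : ℝ) : Measurable fun u : ℝ => ENNReal.ofReal u ^ a :=
  ENNReal.measurable_ofReal.pow_const a

theorem rpow_ofReal_rpow_mul_lintegral_Ioi_le {q : ℝ} (hq : 1 ≤ q) {δ : ℝ} (hδ : 0 < δ)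
    {G : ℝ → ℝ≥0∞} (hG : Measurable G) {u : ℝ} (hu : 0 < u) :
    (ENNReal.ofReal u ^ (δ - q⁻¹) * ∫⁻ v in Ioi u, G v) ^ q ≤
      ENNReal.ofReal δ⁻¹ ^ (q - 1) * (ENNReal.ofReal u ^ (δ - 1) * ∫⁻ v in Ioi u,
        ENNReal.ofReal v ^ (-δ - 1) * (ENNReal.ofReal v ^ (δ + 1) * G v) ^ q) := by
  have hq0 : 0 < q := one_pos.trans_le hq
  have split_integrand : ∫⁻ v in Ioi u, G v =
      ∫⁻ v in Ioi u, ENNReal.ofReal v ^ (-δ - 1) * (ENNReal.ofReal v ^ (δ + 1) * G v) := by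
    refine setLIntegral_congr_fun measurableSet_Ioi fun v hv => ?_
    simp only [← mul_assoc, ofReal_rpow_mul_ofReal_rpow (hu.trans hv)]
    norm_num
  have jensen : (∫⁻ v in Ioi u, G v) ^ q ≤
      (ENNReal.ofReal δ⁻¹ * ENNReal.ofReal u ^ (-δ)) ^ (q - 1) * ∫⁻ v in Ioi u,
        ENNReal.ofReal v ^ (-δ - 1) * (ENNReal.ofReal v ^ (δ + 1) * G v) ^ q := by
    rw [split_integrand, ← lintegral_Ioi_ofReal_rpow_neg_sub_one hδ hu]
    exact rpow_lintegral_mul_le (measurable_ofReal_rpow _).aemeasurable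
      ((measurable_ofReal_rpow _).mul hG).aemeasurable hq
  have exponent : (δ - q⁻¹) * q + -δ * (q - 1) = δ - 1 := by
    field_simp
    ring
  rw [ENNReal.mul_rpow_of_nonneg _ _ hq0.le, ← exponent, ← ofReal_rpow_mul_ofReal_rpow hu,
    ENNReal.rpow_mul, ENNReal.rpow_mul]
  refine (mul_le_mul_right jensen _).trans_eq ?_
  rw [ENNReal.mul_rpow_of_nonneg _ _ (sub_nonneg.2 hq)]
  ring

theorem ofReal_rpow_mul_rpow_mul_rpow {q : ℝ} (hq : 0 < q) (δ : ℝ) {v : ℝ} (hv : 0 < v)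
    (y : ℝ≥0∞) :
    ENNReal.ofReal v ^ δ * (ENNReal.ofReal v ^ (-δ - 1) * (ENNReal.ofReal v ^ (δ + 1) * y) ^ q) =
      (ENNReal.ofReal v ^ (δ - q⁻¹ + 1) * y) ^ q := by
  have exponent : δ + (-δ - 1) + (δ + 1) * q = (δ - q⁻¹ + 1) * q := by
    field_simp
    ring
  rw [ENNReal.mul_rpow_of_nonneg _ _ hq.le, ENNReal.mul_rpow_of_nonneg _ _ hq.le,
    ← ENNReal.rpow_mul, ← ENNReal.rpow_mul, ← mul_assoc, ← mul_assoc,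
    ofReal_rpow_mul_ofReal_rpow hv, ofReal_rpow_mul_ofReal_rpow hv, exponent]

-- Hardy's inequality with its sharp constant `1 / δ`.
theorem lintegral_rpow_ofReal_rpow_mul_lintegral_Ioi_le {q : ℝ} (hq : 1 ≤ q) {δ : ℝ} (hδ : 0 < δ)
    {G : ℝ → ℝ≥0∞} (hG : Measurable G) :
    ∫⁻ u in Ioi (0 : ℝ), (ENNReal.ofReal u ^ (δ - q⁻¹) * ∫⁻ v in Ioi u, G v) ^ q ≤
      ENNReal.ofReal δ⁻¹ ^ q *
        ∫⁻ v in Ioi (0 : ℝ), (ENNReal.ofReal v ^ (δ - q⁻¹ + 1) * G v) ^ q := by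
  set k : ℝ → ℝ≥0∞ := fun v =>
    ENNReal.ofReal v ^ (-δ - 1) * (ENNReal.ofReal v ^ (δ + 1) * G v) ^ q
  have measurable_k : Measurable k :=
    (measurable_ofReal_rpow _).mul (((measurable_ofReal_rpow _).mul hG).pow_const q)
  have constant : ENNReal.ofReal δ⁻¹ ^ (q - 1) * ENNReal.ofReal δ⁻¹ = ENNReal.ofReal δ⁻¹ ^ q := by
    simpa using ofReal_rpow_mul_ofReal_rpow (inv_pos.2 hδ) (q - 1) 1
  calc ∫⁻ u in Ioi (0 : ℝ), (ENNReal.ofReal u ^ (δ - q⁻¹) * ∫⁻ v in Ioi u, G v) ^ q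
      ≤ ∫⁻ u in Ioi (0 : ℝ), ENNReal.ofReal δ⁻¹ ^ (q - 1) *
          (ENNReal.ofReal u ^ (δ - 1) * ∫⁻ v in Ioi u, k v) :=
        setLIntegral_mono' measurableSet_Ioi fun u hu =>
          rpow_ofReal_rpow_mul_lintegral_Ioi_le hq hδ hG hu
    _ = ENNReal.ofReal δ⁻¹ ^ (q - 1) *
          ∫⁻ v in Ioi (0 : ℝ), ∫⁻ u in Ioo 0 v, ENNReal.ofReal u ^ (δ - 1) * k v := by
        simp only [← lintegral_const_mul _ measurable_k]
        rw [lintegral_const_mul' _ _ (by finiteness), lintegral_Ioi_lintegral_Ioi_swap]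
        exact ((measurable_ofReal_rpow _).comp measurable_fst).mul
          (measurable_k.comp measurable_snd)
    _ = ENNReal.ofReal δ⁻¹ ^ (q - 1) * ∫⁻ v in Ioi (0 : ℝ),
          ENNReal.ofReal δ⁻¹ * (ENNReal.ofReal v ^ (δ - q⁻¹ + 1) * G v) ^ q := by
        congr 1
        refine setLIntegral_congr_fun measurableSet_Ioi fun v hv => ?_
        simp only [lintegral_mul_const _ (measurable_ofReal_rpow _),
          lintegral_Ioo_ofReal_rpow_sub_one hδ hv, mul_assoc, k,
          ofReal_rpow_mul_rpow_mul_rpow (one_pos.trans_le hq) δ hv]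
    _ = ENNReal.ofReal δ⁻¹ ^ q *
          ∫⁻ v in Ioi (0 : ℝ), (ENNReal.ofReal v ^ (δ - q⁻¹ + 1) * G v) ^ q := by
        rw [lintegral_const_mul' _ _ ENNReal.ofReal_ne_top, ← mul_assoc, constant]

theorem eLpNorm_ofReal_rpow_mul_lintegral_Ioi_le {p : ℝ≥0∞} (hp : 1 ≤ p) (hp_top : p ≠ ∞)
    {a : ℝ} (ha : 0 < a + p.toReal⁻¹) {G : ℝ → ℝ≥0∞} (hG : Measurable G) :
    eLpNorm (fun u => ENNReal.ofReal u ^ a * ∫⁻ v in Ioi u, G v) p (volume.restrict (Ioi 0)) ≤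
      ENNReal.ofReal (a + p.toReal⁻¹)⁻¹ *
        eLpNorm (fun v => ENNReal.ofReal v ^ (a + 1) * G v) p (volume.restrict (Ioi 0)) := by
  have hp0 : p ≠ 0 := (one_pos.trans_le hp).ne'
  have one_le_toReal : 1 ≤ p.toReal := by simpa using ENNReal.toReal_mono hp_top hp
  have hardy := lintegral_rpow_ofReal_rpow_mul_lintegral_Ioi_le one_le_toReal ha hG
  rw [add_sub_cancel_right] at hardy
  simp only [eLpNorm_eq_lintegral_rpow_enorm_toReal hp0 hp_top, enorm_eq_self, one_div]
  refine (ENNReal.rpow_le_rpow hardy (by positivity)).trans_eq ?_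
  rw [ENNReal.mul_rpow_of_nonneg _ _ (by positivity), ENNReal.rpow_rpow_inv (by positivity)]

theorem mem_Jset_top {a : ℝ} : a ∈ Jset ∞ ↔ 0 ≤ a := by
  simp [Jset]

theorem mem_Jset_of_ne_top {p : ℝ≥0∞} (hp_top : p ≠ ∞) {a : ℝ} :
    a ∈ Jset p ↔ 0 < a + p.toReal⁻¹ := by
  rw [Jset, if_neg hp_top, mem_Ioi, neg_div, one_div, neg_lt_iff_pos_add]

theorem eLpNorm_ofReal_rpow_Ioo_ne_top {p : ℝ≥0∞} (hp : p ≠ 0) {a : ℝ} (ha : a ∈ Jset p) :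
    eLpNorm (fun u : ℝ => ENNReal.ofReal u ^ a) p (volume.restrict (Ioo 0 1)) ≠ ∞ := by
  rcases eq_or_ne p ∞ with rfl | hp_top
  · refine ne_top_of_le_ne_top ENNReal.one_ne_top (essSup_le_of_ae_le _ ?_)
    refine ae_restrict_of_forall_mem measurableSet_Ioo fun u hu => ?_
    exact ENNReal.rpow_le_one (ENNReal.ofReal_le_one.2 hu.2.le) (mem_Jset_top.1 ha)
  · have toReal_pos : 0 < p.toReal := ENNReal.toReal_pos hp hp_top
    have exponent : a * p.toReal = (a + p.toReal⁻¹) * p.toReal - 1 := by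
      field_simp
      ring
    simp only [eLpNorm_eq_lintegral_rpow_enorm_toReal hp hp_top, enorm_eq_self, ← ENNReal.rpow_mul,
      exponent, lintegral_Ioo_ofReal_rpow_sub_one
        (mul_pos ((mem_Jset_of_ne_top hp_top).1 ha) toReal_pos) one_pos,
      ENNReal.ofReal_one, ENNReal.one_rpow, mul_one]
    exact ENNReal.rpow_ne_top_of_nonneg (by positivity) ENNReal.ofReal_ne_top

theorem eLpNorm_top_ofReal_rpow_mul_lintegral_Ioo_le {a : ℝ} (ha : 0 ≤ a) {γ : ℝ} (hγ : γ < 1)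
    (G : ℝ → ℝ≥0∞) :
    eLpNorm (fun u => ENNReal.ofReal u ^ a * ∫⁻ v in Ioo u 1, G v) ∞
        (volume.restrict (Ioo 0 1)) ≤
      ENNReal.ofReal (1 - γ)⁻¹ *
        eLpNorm (fun v => ENNReal.ofReal v ^ (a + γ) * G v) ∞ (volume.restrict (Ioo 0 1)) := by
  simp only [eLpNorm_exponent_top]
  set M := eLpNormEssSup (fun v => ENNReal.ofReal v ^ (a + γ) * G v) (volume.restrict (Ioo 0 1))
  have weighted_le : ∀ᵐ v ∂volume.restrict (Ioo 0 1), ENNReal.ofReal v ^ (a + γ) * G v ≤ M :=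
    ae_le_eLpNormEssSup
  refine essSup_le_of_ae_le _ (ae_restrict_of_forall_mem measurableSet_Ioo fun u hu => ?_)
  have Ioo_subset : Ioo u 1 ⊆ Ioo 0 1 := Ioo_subset_Ioo_left hu.1.le
  calc ENNReal.ofReal u ^ a * ∫⁻ v in Ioo u 1, G v
      = ∫⁻ v in Ioo u 1, ENNReal.ofReal u ^ a * G v :=
        (lintegral_const_mul' _ _ (by finiteness)).symm
    _ ≤ ∫⁻ v in Ioo u 1, ENNReal.ofReal v ^ a * G v :=
        setLIntegral_mono' measurableSet_Ioo fun v hv => by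
          gcongr
          exact hv.1.le
    _ ≤ ∫⁻ v in Ioo 0 1, ENNReal.ofReal v ^ a * G v := lintegral_mono_set Ioo_subset
    _ ≤ ∫⁻ v in Ioo 0 1, ENNReal.ofReal v ^ (1 - γ - 1) * M := by
        refine lintegral_mono_ae ?_
        filter_upwards [ae_restrict_mem measurableSet_Ioo, weighted_le] with v hv hvM
        have exponent : a = 1 - γ - 1 + (a + γ) := by ring
        conv_lhs => rw [exponent, ← ofReal_rpow_mul_ofReal_rpow hv.1, mul_assoc]
        gcongr
    _ = ENNReal.ofReal (1 - γ)⁻¹ * M := by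
        rw [lintegral_mul_const _ (measurable_ofReal_rpow _),
          lintegral_Ioo_ofReal_rpow_sub_one (sub_pos.2 hγ) one_pos]
        simp

theorem eLpNorm_ofReal_rpow_mul_lintegral_Ioo_le {p : ℝ≥0∞} (hp : 1 ≤ p) (hp_top : p ≠ ∞)
    {a : ℝ} (ha : 0 < a + p.toReal⁻¹) {γ : ℝ} (hγ : γ ≤ 1) {G : ℝ → ℝ≥0∞} (hG : Measurable G) :
    eLpNorm (fun u => ENNReal.ofReal u ^ a * ∫⁻ v in Ioo u 1, G v) p
        (volume.restrict (Ioo 0 1)) ≤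
      ENNReal.ofReal (a + p.toReal⁻¹)⁻¹ *
        eLpNorm (fun v => ENNReal.ofReal v ^ (a + γ) * G v) p (volume.restrict (Ioo 0 1)) := by
  set μ := (volume : Measure ℝ).restrict (Ioi 0)
  have restrict_Iio : μ.restrict (Iio 1) = volume.restrict (Ioo 0 1) := by
    rw [Measure.restrict_restrict measurableSet_Iio, Iio_inter_Ioi]
  calc eLpNorm (fun u => ENNReal.ofReal u ^ a * ∫⁻ v in Ioo u 1, G v) p
        (volume.restrict (Ioo 0 1))
      ≤ eLpNorm (fun u => ENNReal.ofReal u ^ a * ∫⁻ v in Ioi u, (Iio 1).indicator G v) p μ := by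
        simp only [setLIntegral_indicator measurableSet_Iio, Iio_inter_Ioi]
        exact eLpNorm_mono_measure _ (Measure.restrict_mono Ioo_subset_Ioi_self le_rfl)
    _ ≤ ENNReal.ofReal (a + p.toReal⁻¹)⁻¹ *
          eLpNorm (fun v => ENNReal.ofReal v ^ (a + 1) * (Iio 1).indicator G v) p μ :=
        eLpNorm_ofReal_rpow_mul_lintegral_Ioi_le hp hp_top ha (hG.indicator measurableSet_Iio)
    _ = ENNReal.ofReal (a + p.toReal⁻¹)⁻¹ *
          eLpNorm (fun v => ENNReal.ofReal v ^ (a + 1) * G v) p (volume.restrict (Ioo 0 1)) := by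
        rw [← restrict_Iio, ← eLpNorm_indicator_eq_eLpNorm_restrict measurableSet_Iio]
        congr 2
        ext v
        exact (indicator_mul_right (Iio 1) (fun v : ℝ => ENNReal.ofReal v ^ (a + 1)) G).symm
    _ ≤ ENNReal.ofReal (a + p.toReal⁻¹)⁻¹ *
          eLpNorm (fun v => ENNReal.ofReal v ^ (a + γ) * G v) p (volume.restrict (Ioo 0 1)) := by
        gcongr 1
        refine eLpNorm_mono_enorm_ae (ae_restrict_of_forall_mem measurableSet_Ioo fun v hv => ?_)
        simp only [enorm_eq_self]
        exact mul_le_mul_left (ENNReal.rpow_le_rpow_of_exponent_ge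
          (ENNReal.ofReal_le_one.2 hv.2.le) (by linarith)) _

theorem exists_eLpNorm_ofReal_rpow_mul_lintegral_Ioo_le {p : ℝ≥0∞} (hp : 1 ≤ p) {a γ : ℝ}
    (ha : a ∈ Jset p) (hγ : γ ≤ 1) (hγ_top : p = ∞ → γ < 1) :
    ∃ C ≠ (∞ : ℝ≥0∞), ∀ G : ℝ → ℝ≥0∞, Measurable G →
      eLpNorm (fun u => ENNReal.ofReal u ^ a * ∫⁻ v in Ioo u 1, G v) p
          (volume.restrict (Ioo 0 1)) ≤
        C * eLpNorm (fun v => ENNReal.ofReal v ^ (a + γ) * G v) p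
          (volume.restrict (Ioo 0 1)) := by
  rcases eq_or_ne p ∞ with rfl | hp_top
  · exact ⟨_, ENNReal.ofReal_ne_top, fun G _ =>
      eLpNorm_top_ofReal_rpow_mul_lintegral_Ioo_le (mem_Jset_top.1 ha) (hγ_top rfl) G⟩
  · exact ⟨_, ENNReal.ofReal_ne_top, fun G hG =>
      eLpNorm_ofReal_rpow_mul_lintegral_Ioo_le hp hp_top ((mem_Jset_of_ne_top hp_top).1 ha) hγ hG⟩

theorem LpOn_eq_eLpNorm_Ioo (g : ℝ → ℝ) (p : ℝ≥0∞) (a b : ℝ) :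
    LpOn g p a b = eLpNorm g p (volume.restrict (Ioo a b)) := by
  rw [LpOn, Measure.restrict_congr_set Ioo_ae_eq_Icc]

theorem LpOn_mono (g : ℝ → ℝ) (p : ℝ≥0∞) {a b c d : ℝ} (h : Icc a b ⊆ Icc c d) :
    LpOn g p a b ≤ LpOn g p c d :=
  eLpNorm_mono_measure g (Measure.restrict_mono h le_rfl)

theorem LpOn_le_add {p : ℝ≥0∞} (hp : 1 ≤ p) (g : ℝ → ℝ) (a b c : ℝ) :
    LpOn g p a c ≤ LpOn g p a b + LpOn g p b c :=
  (eLpNorm_mono_measure g ((Measure.restrict_mono Icc_subset_Icc_union_Icc le_rfl).trans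
    (Measure.restrict_union_le _ _))).trans (eLpNorm_add_measure_le hp g _ _)

theorem LpOn_comp_sub_left (g : ℝ → ℝ) (p : ℝ≥0∞) (a b c : ℝ) :
    LpOn (fun x => g (c - x)) p a b = LpOn g p (c - b) (c - a) := by
  have preserving := (Measure.measurePreserving_sub_left volume c).restrict_preimage
    (measurableSet_Icc (a := c - b) (b := c - a))
  simp only [preimage_const_sub_Icc, sub_sub_cancel] at preserving
  rw [LpOn, LpOn, ← preserving.map_eq]
  exact ((MeasurableEquiv.subLeft c).measurableEmbedding.eLpNorm_map_measure).symm

theorem measurable_jacobi_s19 (a b : ℝ) : Measurable (jacobi a b) := by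
  unfold jacobi
  fun_prop

theorem jacobi_neg (a b x : ℝ) : jacobi a b (-x) = jacobi b a x := by
  rw [jacobi, jacobi, sub_neg_eq_add, ← sub_eq_add_neg, mul_comm]

theorem LpOn_jacobi_mul_neg_one_zero (a b : ℝ) (F : ℝ → ℝ) (p : ℝ≥0∞) :
    LpOn (fun x => jacobi a b x * F x) p (-1) 0 = LpOn (fun x => jacobi b a x * F (-x)) p 0 1 := by
  simpa [jacobi_neg] using (LpOn_comp_sub_left (fun x => jacobi a b x * F x) p 0 1 0).symm

theorem enorm_jacobi_one_sub (a b : ℝ) {u : ℝ} (hu : u ∈ Ioo (0 : ℝ) 1) :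
    ‖jacobi a b (1 - u)‖ₑ = ENNReal.ofReal (2 - u) ^ a * ENNReal.ofReal u ^ b := by
  have two_sub_pos : 0 < 2 - u := by linarith [hu.2]
  rw [jacobi, sub_sub_cancel, show 1 + (1 - u) = 2 - u by ring, enorm_mul,
    Real.enorm_of_nonneg (by positivity), Real.enorm_of_nonneg (Real.rpow_nonneg hu.1.le b),
    ENNReal.ofReal_rpow_of_pos two_sub_pos, ENNReal.ofReal_rpow_of_pos hu.1]

theorem rpow_le_two_rpow_abs {y : ℝ≥0∞} (hy₁ : 1 ≤ y) (hy₂ : y ≤ 2) (a : ℝ) : y ^ a ≤ 2 ^ |a| :=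
  (ENNReal.rpow_le_rpow_of_exponent_le hy₁ (le_abs_self a)).trans
    (ENNReal.rpow_le_rpow hy₂ (abs_nonneg a))

theorem enorm_jacobi_one_sub_le (a b : ℝ) {u : ℝ} (hu : u ∈ Ioo (0 : ℝ) 1) :
    ‖jacobi a b (1 - u)‖ₑ ≤ 2 ^ |a| * ENNReal.ofReal u ^ b := by
  rw [enorm_jacobi_one_sub a b hu]
  gcongr
  exact rpow_le_two_rpow_abs (ENNReal.one_le_ofReal.2 (by linarith [hu.2]))
    (ENNReal.ofReal_le_ofNat.2 (by linarith [hu.1])) a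

theorem ofReal_rpow_le_enorm_jacobi_one_sub (a b : ℝ) {u : ℝ} (hu : u ∈ Ioo (0 : ℝ) 1) :
    ENNReal.ofReal u ^ b ≤ 2 ^ |a| * ‖jacobi a b (1 - u)‖ₑ := by
  have bound := rpow_le_two_rpow_abs (ENNReal.one_le_ofReal.2 (by linarith [hu.2]))
    (ENNReal.ofReal_le_ofNat.2 (by linarith [hu.1] : 2 - u ≤ 2)) (-a)
  calc ENNReal.ofReal u ^ b
      = ENNReal.ofReal (2 - u) ^ (-a) * (ENNReal.ofReal (2 - u) ^ a * ENNReal.ofReal u ^ b) := by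
        rw [← mul_assoc, ofReal_rpow_mul_ofReal_rpow (by linarith [hu.2]), neg_add_cancel,
          ENNReal.rpow_zero, one_mul]
    _ ≤ 2 ^ |a| * ‖jacobi a b (1 - u)‖ₑ := by
        rw [enorm_jacobi_one_sub a b hu, ← abs_neg]
        gcongr

theorem eLpNorm_restrict_le_mul_of_forall_mem {X ε ε' : Type*} [MeasurableSpace X]
    [TopologicalSpace ε] [ContinuousENorm ε] [TopologicalSpace ε'] [ContinuousENorm ε']
    {μ : Measure X} {s : Set X} (hs : MeasurableSet s) {f : X → ε} {g : X → ε'} {c : ℝ≥0∞}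
    (hc : c ≠ ∞) (hfg : ∀ x ∈ s, ‖f x‖ₑ ≤ c * ‖g x‖ₑ) (p : ℝ≥0∞) :
    eLpNorm f p (μ.restrict s) ≤ c * eLpNorm g p (μ.restrict s) := by
  lift c to NNReal using hc
  exact eLpNorm_le_mul_eLpNorm_of_ae_le_mul' (ae_restrict_of_forall_mem hs hfg) p

theorem LpOn_zero_one_eq_eLpNorm_comp_one_sub (g : ℝ → ℝ) (p : ℝ≥0∞) :
    LpOn g p 0 1 = eLpNorm (fun u => g (1 - u)) p (volume.restrict (Ioo 0 1)) := by
  rw [← LpOn_eq_eLpNorm_Ioo, LpOn_comp_sub_left, sub_self, sub_zero]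

theorem LpOn_zero_one_jacobi_mul_le {F : ℝ → ℝ} {H : ℝ → ℝ≥0∞}
    (hFH : ∀ u ∈ Ioo (0 : ℝ) 1, ‖F (1 - u)‖ₑ ≤ H u) (p : ℝ≥0∞) (a b : ℝ) :
    LpOn (fun x => jacobi a b x * F x) p 0 1 ≤
      2 ^ |a| * eLpNorm (fun u => ENNReal.ofReal u ^ b * H u) p (volume.restrict (Ioo 0 1)) := by
  rw [LpOn_zero_one_eq_eLpNorm_comp_one_sub]
  refine eLpNorm_restrict_le_mul_of_forall_mem measurableSet_Ioo (by finiteness)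
    (fun u hu => ?_) p
  rw [enorm_mul, enorm_eq_self, ← mul_assoc]
  exact mul_le_mul' (enorm_jacobi_one_sub_le a b hu) (hFH u hu)

theorem eLpNorm_ofReal_rpow_mul_le_LpOn_zero_one_jacobi_mul (F : ℝ → ℝ) (p : ℝ≥0∞) (a b : ℝ) :
    eLpNorm (fun u => ENNReal.ofReal u ^ b * ‖F (1 - u)‖ₑ) p (volume.restrict (Ioo 0 1)) ≤
      2 ^ |a| * LpOn (fun x => jacobi a b x * F x) p 0 1 := by
  rw [LpOn_zero_one_eq_eLpNorm_comp_one_sub]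
  refine eLpNorm_restrict_le_mul_of_forall_mem measurableSet_Ioo (by finiteness)
    (fun u hu => ?_) p
  rw [enorm_mul, enorm_eq_self, ← mul_assoc]
  gcongr
  exact ofReal_rpow_le_enorm_jacobi_one_sub a b hu

theorem LpOn_zero_one_jacobi_ne_top {p : ℝ≥0∞} (hp : p ≠ 0) (a : ℝ) {b : ℝ} (hb : b ∈ Jset p) :
    LpOn (jacobi a b) p 0 1 ≠ ∞ := by
  have bound := LpOn_zero_one_jacobi_mul_le (F := 1) (H := 1) (by simp) p a b
  simp only [Pi.one_apply, mul_one] at bound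
  exact ne_top_of_le_ne_top
    (ENNReal.mul_ne_top (by finiteness) (eLpNorm_ofReal_rpow_Ioo_ne_top hp hb)) bound

theorem LpOn_jacobi_ne_top {p : ℝ≥0∞} (hp : 1 ≤ p) {a b : ℝ} (ha : a ∈ Jset p)
    (hb : b ∈ Jset p) : LpOn (jacobi a b) p (-1) 1 ≠ ∞ := by
  have hp0 : p ≠ 0 := (one_pos.trans_le hp).ne'
  have left_half : LpOn (jacobi a b) p (-1) 0 = LpOn (jacobi b a) p 0 1 := by
    simpa only [Pi.one_apply, mul_one] using LpOn_jacobi_mul_neg_one_zero a b 1 p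
  refine ne_top_of_le_ne_top ?_ (LpOn_le_add hp (jacobi a b) (-1) 0 1)
  rw [left_half]
  exact ENNReal.add_ne_top.2
    ⟨LpOn_zero_one_jacobi_ne_top hp0 b ha, LpOn_zero_one_jacobi_ne_top hp0 a hb⟩

theorem enorm_intervalIntegral_zero_one_sub_le (G : ℝ → ℝ) {u : ℝ} (hu : u ≤ 1) :
    ‖∫ t in (0 : ℝ)..(1 - u), G t‖ₑ ≤ ∫⁻ v in Ioo u 1, ‖G (1 - v)‖ₑ := by
  have substitution : ∫ t in (0 : ℝ)..(1 - u), G t = ∫ v in Ioo u 1, G (1 - v) := by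
    rw [← integral_Ioc_eq_integral_Ioo, ← intervalIntegral.integral_of_le hu,
      intervalIntegral.integral_comp_sub_left, sub_self]
  rw [substitution]
  exact enorm_integral_le_lintegral_enorm _

theorem exists_LpOn_zero_one_jacobi_mul_integral_le {p : ℝ≥0∞} (hp : 1 ≤ p) (α : ℝ) {β γ : ℝ}
    (hβγ : β - γ ∈ Jset p) (hγ : γ ≤ 1) (hγ_top : p = ∞ → γ < 1) :
    ∃ C ≠ (∞ : ℝ≥0∞), ∀ G : ℝ → ℝ, Measurable G →
      LpOn (fun x => jacobi (α - γ) (β - γ) x * ∫ t in (0 : ℝ)..x, G t) p 0 1 ≤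
        C * LpOn (fun x => jacobi α β x * G x) p 0 1 := by
  obtain ⟨C, hC, hardy⟩ := exists_eLpNorm_ofReal_rpow_mul_lintegral_Ioo_le hp hβγ hγ hγ_top
  refine ⟨2 ^ |α - γ| * (C * 2 ^ |α|), by finiteness, fun G hG => ?_⟩
  calc LpOn (fun x => jacobi (α - γ) (β - γ) x * ∫ t in (0 : ℝ)..x, G t) p 0 1
      ≤ 2 ^ |α - γ| * eLpNorm (fun u => ENNReal.ofReal u ^ (β - γ) *
          ∫⁻ v in Ioo u 1, ‖G (1 - v)‖ₑ) p (volume.restrict (Ioo 0 1)) :=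
        LpOn_zero_one_jacobi_mul_le
          (fun u hu => enorm_intervalIntegral_zero_one_sub_le G hu.2.le) p _ _
    _ ≤ 2 ^ |α - γ| * (C * eLpNorm (fun v => ENNReal.ofReal v ^ β * ‖G (1 - v)‖ₑ) p
          (volume.restrict (Ioo 0 1))) := by
        gcongr
        simpa only [sub_add_cancel] using hardy (fun v => ‖G (1 - v)‖ₑ) (by fun_prop)
    _ ≤ 2 ^ |α - γ| * (C * (2 ^ |α| * LpOn (fun x => jacobi α β x * G x) p 0 1)) := by
        gcongr
        exact eLpNorm_ofReal_rpow_mul_le_LpOn_zero_one_jacobi_mul G p α β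
    _ = 2 ^ |α - γ| * (C * 2 ^ |α|) * LpOn (fun x => jacobi α β x * G x) p 0 1 := by ring

theorem exists_LpOn_jacobi_mul_integral_le {p : ℝ≥0∞} (hp : 1 ≤ p) {α β γ : ℝ}
    (hαγ : α - γ ∈ Jset p) (hβγ : β - γ ∈ Jset p) (hγ : γ ≤ 1) (hγ_top : p = ∞ → γ < 1) :
    ∃ C ≠ (∞ : ℝ≥0∞), ∀ G : ℝ → ℝ, Measurable G →
      LpOn (fun x => jacobi (α - γ) (β - γ) x * ∫ t in (0 : ℝ)..x, G t) p (-1) 1 ≤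
        C * LpOn (fun x => jacobi α β x * G x) p (-1) 1 := by
  obtain ⟨L, hL, left_half⟩ := exists_LpOn_zero_one_jacobi_mul_integral_le hp β hαγ hγ hγ_top
  obtain ⟨R, hR, right_half⟩ := exists_LpOn_zero_one_jacobi_mul_integral_le hp α hβγ hγ hγ_top
  refine ⟨L + R, by finiteness, fun G hG => ?_⟩
  have integral_neg (x : ℝ) : ∫ t in (0 : ℝ)..-x, G t = ∫ t in (0 : ℝ)..x, -G (-t) := by
    rw [intervalIntegral.integral_neg, intervalIntegral.integral_comp_neg, neg_zero,
      intervalIntegral.integral_symm]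
  have left_half_G : LpOn (fun x => jacobi (α - γ) (β - γ) x * ∫ t in (0 : ℝ)..x, G t) p (-1) 0 ≤
      L * LpOn (fun x => jacobi α β x * G x) p (-1) 0 := by
    rw [LpOn_jacobi_mul_neg_one_zero, LpOn_jacobi_mul_neg_one_zero]
    simp only [integral_neg]
    refine (left_half (fun t => -G (-t)) (by fun_prop)).trans_eq ?_
    simp only [mul_neg]
    rw [LpOn, ← Pi.neg_def, eLpNorm_neg, LpOn]
  calc LpOn (fun x => jacobi (α - γ) (β - γ) x * ∫ t in (0 : ℝ)..x, G t) p (-1) 1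
      ≤ L * LpOn (fun x => jacobi α β x * G x) p (-1) 0 +
          R * LpOn (fun x => jacobi α β x * G x) p 0 1 :=
        (LpOn_le_add hp _ (-1) 0 1).trans (add_le_add left_half_G (right_half G hG))
    _ ≤ (L + R) * LpOn (fun x => jacobi α β x * G x) p (-1) 1 := by
        rw [add_mul]
        gcongr <;> exact LpOn_mono _ _ (Icc_subset_Icc (by norm_num) (by norm_num))

theorem measurable_iteratedDeriv {f : ℝ → ℝ} (hf : Measurable f) (n : ℕ) :
    Measurable (iteratedDeriv n f) := by
  cases n with
  | zero => rwa [iteratedDeriv_zero]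
  | succ n => exact iteratedDeriv_succ (f := f) ▸ measurable_deriv _

theorem exists_LpOn_jacobi_mul_iteratedDeriv_sub_le {p : ℝ≥0∞} (hp : 1 ≤ p) {α β γ : ℝ}
    (hγ : γ ≤ 1) (hγ_top : p = ∞ → γ < 1) (hαγ : α - γ ∈ Jset p) (hβγ : β - γ ∈ Jset p) :
    ∃ C ≠ (∞ : ℝ≥0∞), ∀ (r : ℕ) (f : ℝ → ℝ), MemWpr p (r + 1) α β f →
      LpOn (fun x => jacobi (α - γ) (β - γ) x * (iteratedDeriv r f x - iteratedDeriv r f 0)) p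
          (-1) 1 ≤
        C * LpOn (fun x => jacobi α β x * iteratedDeriv (r + 1) f x) p (-1) 1 := by
  obtain ⟨C, hC, hardy⟩ := exists_LpOn_jacobi_mul_integral_le hp hαγ hβγ hγ hγ_top
  refine ⟨C, hC, fun r f ⟨hf, _, ftc, _⟩ => ?_⟩
  refine le_of_eq_of_le ?_ (hardy _ (measurable_iteratedDeriv hf (r + 1)))
  rw [LpOn_eq_eLpNorm_Ioo, LpOn_eq_eLpNorm_Ioo]
  refine eLpNorm_congr_ae (ae_restrict_of_forall_mem measurableSet_Ioo fun x hx => ?_)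
  simp only [ftc r (Nat.lt_succ_self r) x hx, add_sub_cancel_left]

theorem MemWpr.of_LpOn_jacobi_mul_iteratedDeriv_sub_ne_top {p : ℝ≥0∞} (hp : 1 ≤ p) {r : ℕ}
    {α β a b : ℝ} (ha : a ∈ Jset p) (hb : b ∈ Jset p) {f : ℝ → ℝ}
    (hf : MemWpr p (r + 1) α β f)
    (hsub : LpOn (fun x => jacobi a b x * (iteratedDeriv r f x - iteratedDeriv r f 0)) p
      (-1) 1 ≠ ∞) :
    MemWpr p r a b f := by
  obtain ⟨measurable_f, integrable, ftc, _⟩ := hf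
  refine ⟨measurable_f, fun j hj => integrable j (by lia), fun j hj => ftc j (by lia), ?_⟩
  have memLp_sub : MemLp (fun x => jacobi a b x * (iteratedDeriv r f x - iteratedDeriv r f 0)) p
      (volume.restrict (Icc (-1) 1)) :=
    ⟨((measurable_jacobi_s19 a b).mul
      ((measurable_iteratedDeriv measurable_f r).sub_const _)).aestronglyMeasurable, hsub.lt_top⟩
  have memLp_jacobi : MemLp (jacobi a b) p (volume.restrict (Icc (-1) 1)) :=
    ⟨(measurable_jacobi_s19 a b).aestronglyMeasurable, (LpOn_jacobi_ne_top hp ha hb).lt_top⟩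
  convert (memLp_sub.add (memLp_jacobi.mul_const (iteratedDeriv r f 0))).eLpNorm_ne_top using 1
  rw [LpOn]
  congr 1 with x
  simp only [Pi.add_apply]
  ring

theorem statement19_general (p : ℝ≥0∞) (hp : 1 ≤ p) (α β γ : ℝ) (hγ : γ ≤ 1)
    (hγ_top : p = ∞ → γ < 1) (hαγ : α - γ ∈ Jset p) (hβγ : β - γ ∈ Jset p) :
    (∀ (r : ℕ) (f : ℝ → ℝ), MemWpr p (r + 1) α β f → MemWpr p r (α - γ) (β - γ) f) ∧
    ∃ c > (0 : ℝ), ∀ (r : ℕ) (f : ℝ → ℝ), MemWpr p (r + 1) α β f → iteratedDeriv r f 0 = 0 →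
      LpOn (fun x => jacobi (α - γ) (β - γ) x * iteratedDeriv r f x) p (-1) 1 ≤
        ENNReal.ofReal c *
          LpOn (fun x => jacobi α β x * iteratedDeriv (r + 1) f x) p (-1) 1 := by
  obtain ⟨C, hC, hardy⟩ := exists_LpOn_jacobi_mul_iteratedDeriv_sub_le hp hγ hγ_top hαγ hβγ
  refine ⟨fun r f hf => ?_, C.toReal + 1, by positivity, fun r f hf hf0 => ?_⟩
  · exact hf.of_LpOn_jacobi_mul_iteratedDeriv_sub_ne_top hp hαγ hβγ
      (ne_top_of_le_ne_top (ENNReal.mul_ne_top hC hf.2.2.2) (hardy r f hf))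
  · have bound := hardy r f hf
    simp only [hf0, sub_zero] at bound
    refine bound.trans (mul_le_mul_left ?_ _)
    exact (ENNReal.le_ofReal_iff_toReal_le hC (by positivity)).2 (by linarith)

theorem statement19 (p : ℝ≥0∞) (hp : 1 ≤ p) (r : ℕ) (α β γ : ℝ) (hγ : γ < 1)
    (hαγ : α - γ ∈ Jset p) (hβγ : β - γ ∈ Jset p) :
    (∀ f : ℝ → ℝ, MemWpr p (r + 1) α β f → MemWpr p r (α - γ) (β - γ) f) ∧
    ∃ c > (0 : ℝ), ∀ f : ℝ → ℝ, MemWpr p (r + 1) α β f → iteratedDeriv r f 0 = 0 →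
      LpOn (fun x => jacobi (α - γ) (β - γ) x * iteratedDeriv r f x) p (-1) 1 ≤
        ENNReal.ofReal c *
          LpOn (fun x => jacobi α β x * iteratedDeriv (r + 1) f x) p (-1) 1 := by
  obtain ⟨mem, c, hc, bound⟩ := statement19_general p hp α β γ hγ.le (fun _ => hγ) hαγ hβγ
  exact ⟨mem r, c, hc, bound r⟩
end
end
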